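/- arXiv:1804.10573 — 2 statements merged into one kernel-verified Lean document; each statement's English description precedes it below -/
import Mathlib

section
/- (Condition M is open) If ν is a non-pure mixture satisfying Condition M, then there exists δ > 0 such that every mixture ν̄ with ‖ν̄ − ν‖ < δ also satisfies Condition M. -/
open MeasureTheory ProbabilityTheory Real Filter Set Matrix
open scoped ENNReal

noncomputable section

namespace SpinGlass


/-- Coefficient decay: `limsup p⁻¹ log γ_p < 0`. -/
def GammaDecay (γ : ℕ → ℝ) : Prop :=
  (∀ p, 0 ≤ γ p) ∧ ∃ ρ : ℝ, 0 < ρ ∧ ρ < 1 ∧ ∀ᶠ p in atTop, γ p ≤ ρ ^ p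

/-- ν(x) = Σ_{p≥2} γ_p² xᵖ. -/
def nuF (γ : ℕ → ℝ) (x : ℝ) : ℝ := ∑' p : ℕ, if 2 ≤ p then γ p ^ 2 * x ^ p else 0

/-- ν′(x), termwise. -/
def nuD1 (γ : ℕ → ℝ) (x : ℝ) : ℝ :=
  ∑' p : ℕ, if 2 ≤ p then γ p ^ 2 * p * x ^ (p - 1) else 0

/-- ν″(x), termwise. -/
def nuD2 (γ : ℕ → ℝ) (x : ℝ) : ℝ :=
  ∑' p : ℕ, if 2 ≤ p then γ p ^ 2 * p * ((p : ℝ) - 1) * x ^ (p - 2) else 0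

/-- ν is mixed (not a monomial). -/
def Mixed (γ : ℕ → ℝ) : Prop :=
  ∃ p q : ℕ, 2 ≤ p ∧ 2 ≤ q ∧ p ≠ q ∧ γ p ≠ 0 ∧ γ q ≠ 0

/-- The logarithmic potential Ω of the semicircle law. -/
def Omega (x : ℝ) : ℝ :=
  if |x| ≤ 2 then x ^ 2 / 4 - 1 / 2
  else x ^ 2 / 4 - 1 / 2 -
    (|x| / 4 * Real.sqrt (x ^ 2 - 4) - Real.log (Real.sqrt (x ^ 2 / 4 - 1) + |x| / 2))

/-- The 2×2 covariance matrix Σ_q. -/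
def SigmaQ (γ : ℕ → ℝ) (q : ℝ) : Matrix (Fin 2) (Fin 2) ℝ :=
  !![nuF γ (q ^ 2), q ^ 2 * nuD1 γ (q ^ 2);
     q ^ 2 * nuD1 γ (q ^ 2), q ^ 4 * nuD2 γ (q ^ 2) + q ^ 2 * nuD1 γ (q ^ 2)]

/-- The complexity function Θ_{ν,q}(u,x). -/
def Theta (γ : ℕ → ℝ) (q u x : ℝ) : ℝ :=
  1 / 2 + 1 / 2 * Real.log (q ^ 2 * nuD2 γ (q ^ 2) / nuD1 γ (q ^ 2))
    - 1 / 2 * (![u, x] ⬝ᵥ ((SigmaQ γ q)⁻¹ *ᵥ ![u, x]))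
    + Omega (x / (q * Real.sqrt (nuD2 γ (q ^ 2))))

/-- −E₀(ν) is the minimal E with sup_x Θ_{ν,1}(E,x) = 0. -/
def E0 (γ : ℕ → ℝ) : ℝ := - sInf {E : ℝ | (⨆ x : ℝ, Theta γ 1 E x) = 0}

/-- −x₀(ν) is the (unique) maximizer of x ↦ Θ_{ν,1}(−E₀(ν),x). -/
def x0 (γ : ℕ → ℝ) : ℝ :=
  - sSup {x : ℝ | ∀ y : ℝ, Theta γ 1 (-(E0 γ)) y ≤ Theta γ 1 (-(E0 γ)) x}

/-- The coefficients of ν_q(x) = Σ γ_p² q^{2p} xᵖ. -/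
def gammaScale (γ : ℕ → ℝ) (q : ℝ) : ℕ → ℝ := fun p => γ p * q ^ p

def E0q (γ : ℕ → ℝ) (q : ℝ) : ℝ := E0 (gammaScale γ q)

def x0q (γ : ℕ → ℝ) (q : ℝ) : ℝ := q⁻¹ * x0 (gammaScale γ q)

/-- d(r,q₁,q₂) = rν′(q₁q₂r) − q₁q₂ν″(q₁q₂r)(1−r²). -/
def dA (γ : ℕ → ℝ) (r q1 q2 : ℝ) : ℝ :=
  r * nuD1 γ (q1 * q2 * r) - q1 * q2 * nuD2 γ (q1 * q2 * r) * (1 - r ^ 2)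

def a2 (γ : ℕ → ℝ) (r q1 q2 : ℝ) : ℝ :=
  nuD1 γ (q2 ^ 2) / (nuD1 γ (q1 ^ 2) * nuD1 γ (q2 ^ 2) - dA γ r q1 q2 ^ 2)

def a4 (γ : ℕ → ℝ) (r q1 q2 : ℝ) : ℝ :=
  -dA γ r q1 q2 / (nuD1 γ (q1 ^ 2) * nuD1 γ (q2 ^ 2) - dA γ r q1 q2 ^ 2)

/-- υ(r,q₁,q₂) = q₁q₂rν″(q₁q₂r) + ν′(q₁q₂r). -/
def ups (γ : ℕ → ℝ) (r q1 q2 : ℝ) : ℝ :=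
  q1 * q2 * r * nuD2 γ (q1 * q2 * r) + nuD1 γ (q1 * q2 * r)

def SigmaU (γ : ℕ → ℝ) (r q1 q2 : ℝ) : Matrix (Fin 2) (Fin 2) ℝ :=
  !![nuF γ (q1 ^ 2) - q1 ^ 2 * a2 γ r q2 q1 * nuD1 γ (q1 * q2 * r) ^ 2 * (1 - r ^ 2),
     nuF γ (q1 * q2 * r) + q1 * q2 * a4 γ r q1 q2 * nuD1 γ (q1 * q2 * r) ^ 2 * (1 - r ^ 2);
     nuF γ (q1 * q2 * r) + q1 * q2 * a4 γ r q1 q2 * nuD1 γ (q1 * q2 * r) ^ 2 * (1 - r ^ 2),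
     nuF γ (q2 ^ 2) - q2 ^ 2 * a2 γ r q1 q2 * nuD1 γ (q1 * q2 * r) ^ 2 * (1 - r ^ 2)]

def SigmaX (γ : ℕ → ℝ) (r q1 q2 : ℝ) : Matrix (Fin 2) (Fin 2) ℝ :=
  !![q1 ^ 2 * nuD2 γ (q1 ^ 2) + nuD1 γ (q1 ^ 2)
        - ups γ r q1 q2 ^ 2 * (1 - r ^ 2) * a2 γ r q2 q1,
     q1 * q2 * r ^ 2 * nuD2 γ (q1 * q2 * r) + r * nuD1 γ (q1 * q2 * r)
        + ups γ r q1 q2 ^ 2 * (1 - r ^ 2) * a4 γ r q1 q2;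
     q1 * q2 * r ^ 2 * nuD2 γ (q1 * q2 * r) + r * nuD1 γ (q1 * q2 * r)
        + ups γ r q1 q2 ^ 2 * (1 - r ^ 2) * a4 γ r q1 q2,
     q2 ^ 2 * nuD2 γ (q2 ^ 2) + nuD1 γ (q2 ^ 2)
        - ups γ r q1 q2 ^ 2 * (1 - r ^ 2) * a2 γ r q1 q2]

def SigmaB (γ : ℕ → ℝ) (r q1 q2 : ℝ) : Matrix (Fin 2) (Fin 2) ℝ :=
  !![q1 * nuD1 γ (q1 ^ 2)
        - q1 * (1 - r ^ 2) * nuD1 γ (q1 * q2 * r) * ups γ r q1 q2 * a2 γ r q2 q1,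
     q1 * r * nuD1 γ (q1 * q2 * r)
        + q1 * (1 - r ^ 2) * nuD1 γ (q1 * q2 * r) * ups γ r q1 q2 * a4 γ r q1 q2;
     q2 * r * nuD1 γ (q1 * q2 * r)
        + q2 * (1 - r ^ 2) * nuD1 γ (q1 * q2 * r) * ups γ r q2 q1 * a4 γ r q2 q1,
     q2 * nuD1 γ (q2 ^ 2)
        - q2 * (1 - r ^ 2) * nuD1 γ (q1 * q2 * r) * ups γ r q2 q1 * a2 γ r q1 q2]

/-- The 4×4 covariance matrix Σ_{U,X}(r,q₁,q₂), as a block matrix. -/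
def SigmaUX (γ : ℕ → ℝ) (r q1 q2 : ℝ) :
    Matrix (Fin 2 ⊕ Fin 2) (Fin 2 ⊕ Fin 2) ℝ :=
  Matrix.fromBlocks (SigmaU γ r q1 q2) (SigmaB γ r q1 q2)
    (SigmaB γ r q1 q2)ᵀ (SigmaX γ r q1 q2)

/-- The pair complexity Ψ_{ν,q₁,q₂}(r,u₁,u₂,x₁,x₂). -/
def Psi (γ : ℕ → ℝ) (q1 q2 r u1 u2 x1 x2 : ℝ) : ℝ :=
  1 + 1 / 2 * Real.log ((1 - r ^ 2) *
        (q1 ^ 2 * q2 ^ 2 * nuD2 γ (q1 ^ 2) * nuD2 γ (q2 ^ 2)) /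
        (nuD1 γ (q1 ^ 2) * nuD1 γ (q2 ^ 2) - nuD1 γ (q1 * q2 * r) ^ 2))
    - 1 / 2 * ((Sum.elim ![u1, u2] ![x1, x2]) ⬝ᵥ
        ((SigmaUX γ r q1 q2)⁻¹ *ᵥ (Sum.elim ![u1, u2] ![x1, x2])))
    + Omega (x1 / (q1 * Real.sqrt (nuD2 γ (q1 ^ 2))))
    + Omega (x2 / (q2 * Real.sqrt (nuD2 γ (q2 ^ 2))))

/-- Ψ⁰_ν(r). -/
def Psi0 (γ : ℕ → ℝ) (r : ℝ) : ℝ :=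
  Psi γ 1 1 r (-(E0 γ)) (-(E0 γ)) (-(x0 γ)) (-(x0 γ))

/-- G(ν). -/
def Gfun (γ : ℕ → ℝ) : ℝ :=
  Real.log (nuD2 γ 1 / nuD1 γ 1) -
    (nuD2 γ 1 + nuD1 γ 1) * (nuD2 γ 1 * nuF γ 1 + nuD1 γ 1 ^ 2 - nuD1 γ 1 * nuF γ 1) /
      (nuD2 γ 1 * nuD1 γ 1 ^ 2)

/-- ν is pure-like. -/
def PureLike (γ : ℕ → ℝ) : Prop := 0 < Gfun γ

/-- Condition M. -/
def ConditionM (γ : ℕ → ℝ) : Prop :=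
  Mixed γ ∧ PureLike γ ∧
    iteratedDeriv 2 (Psi0 γ) 0 < 0 ∧
    (∀ r ∈ Set.Ioo (-1 : ℝ) 1, r ≠ 0 → Psi0 γ r < Psi0 γ 0) ∧
    Filter.limsup (fun r : ℝ => (Psi0 γ r : EReal)) (nhdsWithin 1 (Set.Ioo (-1 : ℝ) 1))
      < ((Psi0 γ 0 : ℝ) : EReal) ∧
    Filter.limsup (fun r : ℝ => (Psi0 γ r : EReal)) (nhdsWithin (-1) (Set.Ioo (-1 : ℝ) 1))
      < ((Psi0 γ 0 : ℝ) : EReal)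

/-- The norm distance ‖ν̄ − ν‖ = Σ_{p≥2} |γ̄_p² − γ_p²|·p⁴ between two mixtures. -/
def mixDist (γ γ' : ℕ → ℝ) : ℝ :=
  ∑' p : ℕ, if 2 ≤ p then |γ p ^ 2 - γ' p ^ 2| * (p : ℝ) ^ 4 else 0

/-- weighted series -/
def SW (ω : ℕ → ℝ) (γ : ℕ → ℝ) (r : ℝ) : ℝ := ∑' n : ℕ, γ (n + 2) ^ 2 * ω n * r ^ n

def om0 : ℕ → ℝ := fun _ => 1
def om1 : ℕ → ℝ := fun n => (n : ℝ) + 2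
def om2 : ℕ → ℝ := fun n => ((n : ℝ) + 2) * ((n : ℝ) + 1)

def Wt (ω : ℕ → ℝ) : Prop := ∀ n, 0 ≤ ω n ∧ ω n ≤ ((n : ℝ) + 2) ^ 4

lemma wt0 : Wt om0 := fun n => by
  have : (0:ℝ) ≤ n := n.cast_nonneg
  refine ⟨by simp [om0], ?_⟩
  simp only [om0]
  exact one_le_pow₀ (by linarith)

lemma wt1 : Wt om1 := fun n => by
  have : (0:ℝ) ≤ n := n.cast_nonneg
  refine ⟨by simp only [om1]; positivity, ?_⟩
  simp only [om1]
  exact le_self_pow₀ (by linarith) (by norm_num)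

lemma wt2 : Wt om2 := fun n => by
  have : (0:ℝ) ≤ n := n.cast_nonneg
  refine ⟨by simp only [om2]; positivity, ?_⟩
  simp only [om2]
  calc ((n : ℝ) + 2) * ((n : ℝ) + 1) ≤ ((n : ℝ) + 2) ^ 2 := by nlinarith
    _ ≤ _ := pow_le_pow_right₀ (by linarith) (by norm_num)

lemma tsum_shift (f : ℕ → ℝ) (hf : ∀ p, ¬ 2 ≤ p → f p = 0) : ∑' p, f p = ∑' n, f (n + 2) := by
  symm
  apply Function.Injective.tsum_eq (f := f) (g := fun n => n + 2)
  · intro a b h; simpa using h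
  · intro p hp
    by_contra hcon
    apply hp
    apply hf
    intro h2
    exact hcon ⟨p - 2, by simp; omega⟩

lemma nuF_eq (γ : ℕ → ℝ) (r : ℝ) : nuF γ r = r ^ 2 * SW om0 γ r := by
  unfold nuF SW
  rw [tsum_shift _ (fun p hp => by simp [hp]), ← tsum_mul_left]
  congr 1; ext n
  simp [om0]; ring

lemma nuD1_eq (γ : ℕ → ℝ) (r : ℝ) : nuD1 γ r = r * SW om1 γ r := by
  unfold nuD1 SW
  rw [tsum_shift _ (fun p hp => by simp [hp]), ← tsum_mul_left]
  congr 1; ext n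
  have : n + 2 - 1 = n + 1 := by omega
  simp [om1, this]; ring

lemma nuD2_eq (γ : ℕ → ℝ) (r : ℝ) : nuD2 γ r = SW om2 γ r := by
  unfold nuD2 SW
  rw [tsum_shift _ (fun p hp => by simp [hp])]
  congr 1; ext n
  simp only [om2, Nat.le_add_left, if_true, Nat.add_sub_cancel]
  push_cast; ring

lemma mixDist_eq (γ' γ : ℕ → ℝ) :
    mixDist γ' γ = ∑' n : ℕ, |γ' (n + 2) ^ 2 - γ (n + 2) ^ 2| * ((n : ℝ) + 2) ^ 4 := by
  unfold mixDist
  rw [tsum_shift _ (fun p hp => by simp [hp])]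
  congr 1; ext n
  simp

lemma summ4 {γ : ℕ → ℝ} (h : GammaDecay γ) :
    Summable (fun n : ℕ => γ (n + 2) ^ 2 * ((n : ℝ) + 2) ^ 4) := by
  obtain ⟨h0, ρ, hρ0, hρ1, hev⟩ := h
  have key : Summable (fun p : ℕ => γ p ^ 2 * (p : ℝ) ^ 4) := by
    have h1 : Summable (fun p : ℕ => (p : ℝ) ^ 4 * (ρ ^ 2) ^ p) :=
      summable_pow_mul_geometric_of_norm_lt_one 4 (by
        rw [Real.norm_eq_abs, abs_of_pos (by positivity)]; nlinarith)
    refine Summable.of_norm_bounded_eventually_nat h1 ?_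
    filter_upwards [hev] with p hp
    have h3 : γ p ^ 2 ≤ (ρ ^ 2) ^ p := by
      rw [← pow_mul, mul_comm 2 p, pow_mul]
      exact pow_le_pow_left₀ (h0 p) hp 2
    rw [Real.norm_eq_abs, abs_of_nonneg (by positivity)]
    calc _ ≤ (ρ ^ 2) ^ p * (p : ℝ) ^ 4 := by gcongr
      _ = _ := by ring
  have := (summable_nat_add_iff 2).mpr key
  simpa using this

lemma term_bound {ω : ℕ → ℝ} (hω : Wt ω) (c : ℝ) {r : ℝ} (hr : |r| ≤ 1) (n : ℕ) :
    ‖c * ω n * r ^ n‖ ≤ |c| * ((n : ℝ) + 2) ^ 4 := by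
  rw [norm_mul, norm_mul, Real.norm_eq_abs, Real.norm_eq_abs, abs_of_nonneg (hω n).1, norm_pow,
    Real.norm_eq_abs]
  have h1 : |r| ^ n ≤ 1 := pow_le_one₀ (abs_nonneg _) hr
  calc |c| * ω n * |r| ^ n ≤ |c| * ω n * 1 := by
        apply mul_le_mul_of_nonneg_left h1; exact mul_nonneg (abs_nonneg _) (hω n).1
    _ ≤ _ := by rw [mul_one]; exact mul_le_mul_of_nonneg_left (hω n).2 (abs_nonneg _)

lemma SW_summable {ω γ : ℕ → ℝ} (hω : Wt ω) (h : GammaDecay γ) {r : ℝ} (hr : |r| ≤ 1) :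
    Summable (fun n : ℕ => γ (n + 2) ^ 2 * ω n * r ^ n) := by
  refine Summable.of_norm_bounded (summ4 h) (fun n => ?_)
  have := term_bound hω (γ (n+2) ^ 2) hr n
  rwa [abs_of_nonneg (sq_nonneg _)] at this

lemma SW_hasSum {ω γ : ℕ → ℝ} (hω : Wt ω) (h : GammaDecay γ) {r : ℝ} (hr : |r| ≤ 1) :
    HasSum (fun n : ℕ => γ (n + 2) ^ 2 * ω n * r ^ n) (SW ω γ r) := (SW_summable hω h hr).hasSum

lemma mix_summable {γ γ' : ℕ → ℝ} (h : GammaDecay γ) (h' : GammaDecay γ') :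
    Summable (fun n : ℕ => |γ' (n + 2) ^ 2 - γ (n + 2) ^ 2| * ((n : ℝ) + 2) ^ 4) := by
  refine Summable.of_norm_bounded ((summ4 h').add (summ4 h)) (fun n => ?_)
  rw [Real.norm_eq_abs, abs_of_nonneg (by positivity), ← add_mul]
  gcongr
  refine (norm_sub_le (γ' (n + 2) ^ 2) (γ (n + 2) ^ 2)).trans ?_
  rw [Real.norm_of_nonneg (sq_nonneg _), Real.norm_of_nonneg (sq_nonneg _)]

lemma SW_dist {ω γ γ' : ℕ → ℝ} (hω : Wt ω) (h : GammaDecay γ) (h' : GammaDecay γ') {r : ℝ}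
    (hr : |r| ≤ 1) : |SW ω γ' r - SW ω γ r| ≤ mixDist γ' γ := by
  rw [mixDist_eq]
  unfold SW
  rw [← (SW_summable hω h' hr).tsum_sub (SW_summable hω h hr)]
  rw [← Real.norm_eq_abs]
  refine tsum_of_norm_bounded (mix_summable h h').hasSum (fun n => ?_)
  have := term_bound hω (γ' (n+2) ^ 2 - γ (n+2) ^ 2) hr n
  rw [← sub_mul, ← sub_mul]
  exact this

lemma coef_dist {γ γ' : ℕ → ℝ} (h : GammaDecay γ) (h' : GammaDecay γ') (p : ℕ) (hp : 2 ≤ p) :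
    |γ' p ^ 2 - γ p ^ 2| ≤ mixDist γ' γ := by
  rw [mixDist_eq]
  obtain ⟨n, rfl⟩ := Nat.exists_eq_add_of_le' hp
  have h1 := (mix_summable h h').le_tsum n (fun j _ => by positivity)
  refine le_trans ?_ h1
  have : (0:ℝ) ≤ n := n.cast_nonneg
  exact le_mul_of_one_le_right (abs_nonneg _) (one_le_pow₀ (by linarith))

lemma SW_cont {ω γ : ℕ → ℝ} (hω : Wt ω) (h : GammaDecay γ) :
    ContinuousOn (SW ω γ) (Icc (-1) 1) := by
  unfold SW
  refine continuousOn_tsum (fun n => by fun_prop) (summ4 h) (fun n r hr => ?_)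
  have := term_bound hω (γ (n+2) ^ 2) (abs_le.mpr hr) n
  rwa [abs_of_nonneg (sq_nonneg _)] at this

lemma SW_analytic {ω γ : ℕ → ℝ} (hω : Wt ω) (h : GammaDecay γ) :
    AnalyticAt ℝ (SW ω γ) 0 := by
  let p := FormalMultilinearSeries.ofScalars ℝ (fun n => γ (n + 2) ^ 2 * ω n)
  have hr : (1 : ENNReal) ≤ p.radius := by
    have := p.le_radius_of_summable_norm (r := 1) (by
      have := (SW_summable hω h (r := 1) (by simp)).norm
      refine this.congr (fun n => ?_)
      simp [p])
    simpa using this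
  have h1 := (p.hasFPowerSeriesOnBall (lt_of_lt_of_le (by simp) hr)).analyticAt
  have h2 : p.sum = SW ω γ := by
    ext r
    simp only [FormalMultilinearSeries.sum, p, SW]
    congr 1; ext n
    simp [mul_comm]
  rwa [h2] at h1

lemma SW_mono {ω γ : ℕ → ℝ} (hω : Wt ω) (h : GammaDecay γ) {r : ℝ} (hr : |r| ≤ 1) :
    |SW ω γ r| ≤ SW ω γ 1 := by
  unfold SW
  rw [← Real.norm_eq_abs]
  refine tsum_of_norm_bounded (SW_hasSum hω h (r := 1) (by simp)) (fun n => ?_)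
  rw [norm_mul, norm_pow, Real.norm_of_nonneg (mul_nonneg (sq_nonneg _) (hω n).1)]
  have h1 : ‖r‖ ^ n ≤ 1 := pow_le_one₀ (abs_nonneg _) hr
  rw [one_pow]
  exact mul_le_mul_of_nonneg_left h1 (mul_nonneg (sq_nonneg _) (hω n).1)


lemma hasSum_subst {f g : ℕ → ℝ} {x y : ℝ} (h : HasSum g y) (hfg : ∀ n, f n = g n) (hxy : x = y) :
    HasSum f x := by
  have : f = g := funext hfg
  rw [this, hxy]; exact h

lemma Dn_aux (s : ℝ) (h0 : 0 ≤ s) (h1 : s < 1) (n : ℕ) :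
    0 ≤ 1 - s ^ (2 * n + 2) - ((n : ℝ) + 1) * s ^ n * (1 - s ^ 2) ∧
    (1 ≤ n → 0 < 1 - s ^ (2 * n + 2) - ((n : ℝ) + 1) * s ^ n * (1 - s ^ 2)) := by
  induction n with
  | zero => simp
  | succ n ih =>
    have key : 0 < 1 - s ^ (2 * (n+1) + 2) - (((n+1 : ℕ) : ℝ) + 1) * s ^ (n+1) * (1 - s ^ 2) := by
      have e : 1 - s ^ (2 * (n+1) + 2) - (((n+1 : ℕ) : ℝ) + 1) * s ^ (n+1) * (1 - s ^ 2)
        = s * (1 - s ^ (2 * n + 2) - ((n : ℝ) + 1) * s ^ n * (1 - s ^ 2))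
          + (1 - s) * (1 - s ^ (n+1)) * (1 - s ^ (n+2)) := by push_cast; ring
      rw [e]
      have h2 : s ^ (n+1) < 1 := pow_lt_one₀ h0 h1 (by omega)
      have h3 : s ^ (n+2) < 1 := pow_lt_one₀ h0 h1 (by omega)
      have h4 : 0 < (1 - s) * (1 - s ^ (n+1)) * (1 - s ^ (n+2)) :=
        mul_pos (mul_pos (by linarith) (by linarith)) (by linarith)
      have h5 := mul_nonneg h0 ih.1
      linarith
    exact ⟨key.le, fun _ => key⟩

lemma Dn_pos {e r : ℝ} (he : e = 1 ∨ e = -1) (hr : |r| < 1) (n : ℕ) :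
    0 ≤ 1 - r ^ (2 * n + 2) + e * ((n : ℝ) + 1) * r ^ n * (1 - r ^ 2) ∧
    (1 ≤ n → 0 < 1 - r ^ (2 * n + 2) + e * ((n : ℝ) + 1) * r ^ n * (1 - r ^ 2)) := by
  have h := Dn_aux |r| (abs_nonneg r) hr n
  have h2 : |r| ^ (2 * n + 2) = r ^ (2 * n + 2) := by
    rw [show 2 * n + 2 = 2 * (n + 1) by ring, pow_mul, pow_mul, sq_abs]
  rw [h2, sq_abs] at h
  have h3 : -(|r| ^ n) ≤ e * r ^ n := by
    have : |e * r ^ n| = |r| ^ n := by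
      rw [abs_mul, abs_pow]
      rcases he with rfl | rfl <;> simp
    rw [← this]; exact neg_abs_le _
  have hy : 0 < 1 - r ^ 2 := by
    have := (sq_lt_one_iff_abs_lt_one r).mpr hr; linarith
  have h4 : 0 ≤ ((n : ℝ) + 1) * (1 - r ^ 2) * (e * r ^ n + |r| ^ n) :=
    mul_nonneg (mul_nonneg (by positivity) hy.le) (by linarith)
  constructor
  · have := h.1; nlinarith
  · intro hn; have := h.2 hn; nlinarith

/-- block quadratic form -/
def KQ (e v b a s0 s1 s2 r α β t : ℝ) : ℝ :=
  α ^ 2 * (v + e * (r ^ 2 * s0)) + 2 * α * β * (b + e * (r ^ 2 * s1))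
  + β ^ 2 * (a + b + e * (r ^ 2 * s2 + r ^ 2 * s1))
  + e * (2 * t * (1 - r ^ 2) * (α * (r * s1) + β * (r * (s1 + s2))))
  + t ^ 2 * (1 - r ^ 2) * (b - e * (r ^ 2 * s1 - (1 - r ^ 2) * s2))

def KT (e r α β t : ℝ) (n : ℕ) : ℝ := KQ e 1 (n + 2) ((n + 2) * (n + 1)) (r ^ n)
  ((n + 2) * r ^ n) ((n + 2) * (n + 1) * r ^ n) r α β t

lemma U_pos {e r : ℝ} (he : e = 1 ∨ e = -1) (hr : |r| < 1) (n : ℕ) : 0 < 1 + e * r ^ (n + 2) := by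
  have h1 : |e * r ^ (n+2)| < 1 := by
    rw [abs_mul, abs_pow]
    have : |r| ^ (n+2) < 1 := pow_lt_one₀ (abs_nonneg _) hr (by omega)
    rcases he with rfl | rfl <;> simpa using this
  linarith [(abs_lt.mp h1).1]

lemma KT_id {e r : ℝ} (he : e = 1 ∨ e = -1) (α β t : ℝ) (n : ℕ) :
    (1 + e * r ^ (n + 2)) * KT e r α β t n =
    ((α + (n+2) * β) * (1 + e * r ^ (n + 2)) + e * t * (1 - r ^ 2) * ((n+2) * r ^ (n+1))) ^ 2
    + t ^ 2 * (1 - r ^ 2) * (n + 2) *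
      (1 - r ^ (2 * n + 2) + e * ((n : ℝ) + 1) * r ^ n * (1 - r ^ 2)) := by
  unfold KT KQ
  rcases he with rfl | rfl <;> ring

lemma KT_nonneg {e r : ℝ} (he : e = 1 ∨ e = -1) (hr : |r| < 1) (α β t : ℝ) (n : ℕ) :
    0 ≤ KT e r α β t n := by
  have hU := U_pos he hr n
  have hy : 0 < 1 - r ^ 2 := by
    have := (sq_lt_one_iff_abs_lt_one r).mpr hr; linarith
  have h := KT_id (r := r) he α β t n
  have h2 : 0 ≤ (1 + e * r ^ (n + 2)) * KT e r α β t n := by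
    rw [h]
    have := (Dn_pos he hr n).1
    positivity
  exact nonneg_of_mul_nonneg_right h2 hU

lemma KT_zero {e r : ℝ} (he : e = 1 ∨ e = -1) (hr : |r| < 1) {α β t : ℝ} {n : ℕ} (hn : 1 ≤ n)
    (h0 : KT e r α β t n = 0) : t = 0 ∧ α + (n+2) * β = 0 := by
  have hU := U_pos he hr n
  have hy : 0 < 1 - r ^ 2 := by
    have := (sq_lt_one_iff_abs_lt_one r).mpr hr; linarith
  have h := KT_id (r := r) he α β t n
  rw [h0, mul_zero] at h
  have hD := (Dn_pos he hr n).2 hn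
  have hn2 : (0:ℝ) < (n:ℝ) + 2 := by positivity
  have ht : t = 0 := by
    by_contra ht
    have : 0 < t ^ 2 * (1 - r ^ 2) * (n + 2) *
      (1 - r ^ (2 * n + 2) + e * ((n : ℝ) + 1) * r ^ n * (1 - r ^ 2)) := by positivity
    nlinarith [sq_nonneg ((α + (n+2) * β) * (1 + e * r ^ (n + 2)) + e * t * (1 - r ^ 2) * ((n+2) * r ^ (n+1)))]
  subst ht
  refine ⟨rfl, ?_⟩
  have h' : ((α + (n+2) * β) * (1 + e * r ^ (n + 2))) ^ 2 = 0 := by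
    rw [h]; ring
  rcases mul_eq_zero.mp (pow_eq_zero_iff (two_ne_zero) |>.mp h') with h | h
  · exact h
  · exact absurd h hU.ne'

lemma KT_zero' {e r : ℝ} (he : e = 1 ∨ e = -1) (hr : |r| < 1) {α β : ℝ} {n : ℕ}
    (h0 : KT e r α β 0 n = 0) : α + (n+2) * β = 0 := by
  have hU := U_pos he hr n
  have h := KT_id (r := r) he α β 0 n
  rw [h0, mul_zero] at h
  have h' : ((α + (n+2) * β) * (1 + e * r ^ (n + 2))) ^ 2 = 0 := by
    rw [h]; ring
  rcases mul_eq_zero.mp (pow_eq_zero_iff (two_ne_zero) |>.mp h') with h | h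
  · exact h
  · exact absurd h hU.ne'

lemma KQ_pos {γ : ℕ → ℝ} (hγ : GammaDecay γ) (hm : Mixed γ) {e r : ℝ} (he : e = 1 ∨ e = -1)
    (hr : |r| < 1) {α β t : ℝ} (hne : ¬ (α = 0 ∧ β = 0 ∧ t = 0)) :
    0 < KQ e (SW om0 γ 1) (SW om1 γ 1) (SW om2 γ 1) (SW om0 γ r) (SW om1 γ r) (SW om2 γ r)
      r α β t := by
  have H1 : ∀ {ω}, Wt ω → HasSum (fun n : ℕ => γ (n + 2) ^ 2 * ω n) (SW ω γ 1) := fun hω => by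
    simpa using SW_hasSum hω hγ (r := 1) (by simp)
  have H2 : ∀ {ω}, Wt ω → HasSum (fun n : ℕ => γ (n + 2) ^ 2 * ω n * r ^ n) (SW ω γ r) :=
    fun hω => SW_hasSum hω hγ hr.le
  have hs : HasSum (fun n : ℕ => γ (n + 2) ^ 2 * KT e r α β t n)
      (KQ e (SW om0 γ 1) (SW om1 γ 1) (SW om2 γ 1) (SW om0 γ r) (SW om1 γ r) (SW om2 γ r)
      r α β t) := by
    have := ((((((H1 wt0).mul_left (α^2)).add ((H1 wt1).mul_left (2*α*β+β^2+t^2*(1-r^2)))).add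
      ((H1 wt2).mul_left (β^2))).add ((H2 wt0).mul_left (α^2*e*r^2))).add
      ((H2 wt1).mul_left (2*α*β*e*r^2+β^2*e*r^2 + e*2*t*(1-r^2)*r*(α+β) - t^2*(1-r^2)*e*r^2))).add
      ((H2 wt2).mul_left (β^2*e*r^2 + e*2*t*(1-r^2)*r*β + t^2*(1-r^2)*e*(1-r^2)))
    refine hasSum_subst this ?_ ?_
    · intro n; simp only [KT, KQ, om0, om1, om2]; ring
    · simp only [KQ]; ring
  have hnn : ∀ n, 0 ≤ γ (n + 2) ^ 2 * KT e r α β t n :=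
    fun n => mul_nonneg (sq_nonneg _) (KT_nonneg he hr _ _ _ _)
  refine lt_of_le_of_ne (hs.nonneg hnn) (fun h0 => ?_)
  rw [← h0] at hs
  have hz := (hasSum_zero_iff_of_nonneg hnn).mp hs
  have hz' : ∀ n, γ (n+2) ≠ 0 → KT e r α β t n = 0 := fun n hn => by
    have := congrFun hz n
    simp only [Pi.zero_apply, mul_eq_zero] at this
    rcases this with h | h
    · exact absurd (pow_eq_zero_iff (by norm_num) |>.mp h) hn
    · exact h
  obtain ⟨p, q, hp, hq, hpq, hgp, hgq⟩ := hm
  obtain ⟨p, rfl⟩ := Nat.exists_eq_add_of_le' hp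
  obtain ⟨q, rfl⟩ := Nat.exists_eq_add_of_le' hq
  have ht : t = 0 := by
    rcases Nat.eq_zero_or_pos p with h | h
    · exact (KT_zero he hr (n := q) (by omega) (hz' q hgq)).1
    · exact (KT_zero he hr (n := p) (by omega) (hz' p hgp)).1
  subst ht
  have e1 := KT_zero' he hr (hz' p hgp)
  have e2 := KT_zero' he hr (hz' q hgq)
  have hpq' : (p:ℝ) - q ≠ 0 := by
    rw [sub_ne_zero]; intro h; apply hpq; have : p = q := by exact_mod_cast h
    rw [this]
  have hb : β = 0 := by
    have : ((p:ℝ) - q) * β = 0 := by linarith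
    rcases mul_eq_zero.mp this with h | h
    · exact absurd h hpq'
    · exact h
  subst hb
  exact hne ⟨by simpa using e1, rfl, rfl⟩

/-- basic facts for mixed mixtures -/
structure Basic (v b a : ℝ) : Prop where
  b0 : 0 < b
  ba : b < a
  det : 0 < v * (a + b) - b ^ 2
  v0 : 0 < v

lemma mixed_basic {γ : ℕ → ℝ} (hγ : GammaDecay γ) (hm : Mixed γ) :
    Basic (SW om0 γ 1) (SW om1 γ 1) (SW om2 γ 1) := by
  have H := fun α β t h => KQ_pos hγ hm (e := 1) (r := 0) (Or.inl rfl) (by simp) (α := α) (β := β) (t := t) h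
  have hq : ∀ α β : ℝ, ¬(α = 0 ∧ β = 0) → 0 < α ^ 2 * SW om0 γ 1 + 2 * α * β * SW om1 γ 1 +
      β ^ 2 * (SW om2 γ 1 + SW om1 γ 1) := fun α β h => by
    have := H α β 0 (fun hh => h ⟨hh.1, hh.2.1⟩)
    simpa [KQ] using this
  have hv : 0 < SW om0 γ 1 := by simpa using hq 1 0 (by simp)
  have hdet : 0 < SW om0 γ 1 * (SW om2 γ 1 + SW om1 γ 1) - SW om1 γ 1 ^ 2 := by
    have := hq (SW om1 γ 1) (-SW om0 γ 1) (fun h => hv.ne' (by linarith [h.2]))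
    have h2 : 0 < SW om0 γ 1 * (SW om0 γ 1 * (SW om2 γ 1 + SW om1 γ 1) - SW om1 γ 1 ^ 2) := by
      nlinarith
    exact pos_of_mul_pos_right h2 hv.le
  have h1 : ∀ {ω}, Wt ω → HasSum (fun n : ℕ => γ (n + 2) ^ 2 * ω n) (SW ω γ 1) := fun hω => by
    simpa using SW_hasSum hω hγ (r := 1) (by simp)
  obtain ⟨p, q, hp, hq, hpq, hgp, hgq⟩ := hm
  obtain ⟨p, rfl⟩ := Nat.exists_eq_add_of_le' hp
  obtain ⟨q, rfl⟩ := Nat.exists_eq_add_of_le' hq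
  have hd : HasSum (fun n : ℕ => γ (n + 2) ^ 2 * (((n:ℝ) + 2) * n)) (SW om2 γ 1 - SW om1 γ 1) := by
    refine hasSum_subst ((h1 wt2).sub (h1 wt1)) ?_ rfl
    intro n; simp only [om1, om2]; ring
  have hdn : ∀ n : ℕ, 0 ≤ γ (n + 2) ^ 2 * (((n:ℝ) + 2) * n) := fun n => by positivity
  have hb : ∀ n : ℕ, 0 ≤ γ (n + 2) ^ 2 * om1 n := fun n => mul_nonneg (sq_nonneg _) (wt1 n).1
  refine ⟨?_, ?_, hdet, hv⟩
  · refine lt_of_lt_of_le ?_ (le_hasSum (h1 wt1) p (fun j _ => hb j))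
    simp only [om1]; positivity
  · have : 0 < SW om2 γ 1 - SW om1 γ 1 := by
      rcases Nat.eq_zero_or_pos p with h | h
      · have hq0 : 0 < q := by omega
        refine lt_of_lt_of_le ?_ (le_hasSum hd q (fun j _ => hdn j))
        positivity
      · refine lt_of_lt_of_le ?_ (le_hasSum hd p (fun j _ => hdn j))
        positivity
    linarith


lemma Omega_neg (x : ℝ) : Omega (-x) = Omega x := by
  simp [Omega]

lemma Omega_n {n : ℝ} (h0 : 0 < n) (h1 : n ≤ 1) : Omega (n + 1 / n) = n ^ 2 / 2 - Real.log n := by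
  rcases eq_or_lt_of_le h1 with rfl | h1
  · norm_num [Omega]
  have hp : 0 < n + 1 / n := by positivity
  have hinv : 1 < 1 / n := by rw [lt_div_iff₀ h0]; linarith
  have h2 : ¬ |n + 1 / n| ≤ 2 := by
    rw [abs_of_pos hp, not_le]
    have : n + 1 / n - 2 = (1 - n) ^ 2 / n := by field_simp; ring
    have : 0 < (1 - n) ^ 2 / n := by
      have : 0 < 1 - n := by linarith
      positivity
    linarith
  have s1 : Real.sqrt ((n + 1 / n) ^ 2 - 4) = 1 / n - n := by
    rw [show (n + 1 / n) ^ 2 - 4 = (1 / n - n) ^ 2 by field_simp; ring]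
    exact Real.sqrt_sq (by linarith)
  have s2 : Real.sqrt ((n + 1 / n) ^ 2 / 4 - 1) = (1 / n - n) / 2 := by
    rw [show (n + 1 / n) ^ 2 / 4 - 1 = ((1 / n - n) / 2) ^ 2 by field_simp; ring]
    exact Real.sqrt_sq (by linarith)
  rw [Omega, if_neg h2, s1, s2, abs_of_pos hp]
  rw [show (1 / n - n) / 2 + (n + 1 / n) / 2 = n⁻¹ by field_simp; ring, Real.log_inv]
  field_simp; ring

lemma exists_n {t : ℝ} (ht : 2 < t) : ∃ n, 0 < n ∧ n ≤ 1 ∧ t = n + 1 / n := by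
  have hs : 0 ≤ t ^ 2 - 4 := by nlinarith
  have hs2 := Real.sq_sqrt hs
  have hs0 := Real.sqrt_nonneg (t ^ 2 - 4)
  have hlt : Real.sqrt (t ^ 2 - 4) < t := by
    rw [Real.sqrt_lt' (by linarith)]; linarith
  have hgt : t - 2 ≤ Real.sqrt (t ^ 2 - 4) := by
    apply Real.le_sqrt_of_sq_le; nlinarith
  have hn : 0 < (t - Real.sqrt (t ^ 2 - 4)) / 2 := by linarith
  refine ⟨(t - Real.sqrt (t ^ 2 - 4)) / 2, hn, by linarith, ?_⟩
  set s := Real.sqrt (t ^ 2 - 4)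
  field_simp
  rw [eq_div_iff (by linarith)]
  nlinarith

def DD (m n : ℝ) : ℝ := m ^ 2 / 2 - Real.log m + m * ((n + 1 / n) - (m + 1 / m))
  + ((n + 1 / n) - (m + 1 / m)) ^ 2 / 4 - (n ^ 2 / 2 - Real.log n)

lemma DD_deriv (m : ℝ) {n : ℝ} (h0 : 0 < n) : HasDerivAt (DD m)
    ((n ^ 2 - 1) / n ^ 2 * (((m - n) + (1 / n - 1 / m)) / 2)) n := by
  have h1 : HasDerivAt (fun n : ℝ => (n + 1 / n) - (m + 1 / m)) (1 - 1 / n ^ 2) n := by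
    have := ((hasDerivAt_id n).add (hasDerivAt_inv h0.ne')).sub_const (m + 1 / m)
    refine (this.congr_deriv ?_).congr_of_eventuallyEq ?_
    · field_simp; ring
    · filter_upwards with x; simp
  have h2 := ((((hasDerivAt_const n (m ^ 2 / 2 - Real.log m)).add (h1.const_mul m)).add
    ((h1.pow 2).div_const 4))).sub ((((hasDerivAt_id n).pow 2).div_const 2).sub
      (Real.hasDerivAt_log h0.ne'))
  refine (h2.congr_deriv ?_).congr_of_eventuallyEq ?_
  · simp only [id, show (2 - 1 : ℕ) = 1 from rfl, pow_one]
    generalize 1 / m = M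
    push_cast
    field_simp; ring
  · filter_upwards with x; simp [DD]

lemma DD_nonneg {m n : ℝ} (hm : 0 < m) (hm1 : m ≤ 1) (hn : 0 < n) (hn1 : n ≤ 1) : 0 ≤ DD m n := by
  have h00 : DD m m = 0 := by simp [DD]
  rcases le_total n m with h | h
  · have : AntitoneOn (DD m) (Icc n m) := by
      apply antitoneOn_of_deriv_nonpos (convex_Icc _ _)
      · intro x hx; exact (DD_deriv m (by linarith [hx.1])).continuousAt.continuousWithinAt
      · intro x hx; rw [interior_Icc] at hx
        exact (DD_deriv m (by linarith [hx.1])).differentiableAt.differentiableWithinAt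
      · intro x hx; rw [interior_Icc] at hx
        have hx0 : 0 < x := by linarith [hx.1]
        rw [(DD_deriv m hx0).deriv]
        have h1 : 1 / m ≤ 1 / x := one_div_le_one_div_of_le hx0 hx.2.le
        apply mul_nonpos_of_nonpos_of_nonneg
        · apply div_nonpos_of_nonpos_of_nonneg
          · nlinarith [hx.2]
          · positivity
        · linarith [hx.2]
    have := this (left_mem_Icc.mpr h) (right_mem_Icc.mpr h) h
    linarith
  · have : MonotoneOn (DD m) (Icc m n) := by
      apply monotoneOn_of_deriv_nonneg (convex_Icc _ _)
      · intro x hx; exact (DD_deriv m (by linarith [hx.1])).continuousAt.continuousWithinAt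
      · intro x hx; rw [interior_Icc] at hx
        exact (DD_deriv m (by linarith [hx.1])).differentiableAt.differentiableWithinAt
      · intro x hx; rw [interior_Icc] at hx
        have hx0 : 0 < x := by linarith [hx.1]
        rw [(DD_deriv m hx0).deriv]
        have h1 : 1 / x ≤ 1 / m := one_div_le_one_div_of_le hm hx.1.le
        apply mul_nonneg_of_nonpos_of_nonpos
        · apply div_nonpos_of_nonpos_of_nonneg
          · nlinarith [hx.2]
          · positivity
        · linarith [hx.1]
    have := this (left_mem_Icc.mpr h) (right_mem_Icc.mpr h) h
    linarith

lemma Omega_tangent {m : ℝ} (hm : 0 < m) (hm1 : m ≤ 1) (t : ℝ) :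
    Omega t ≤ m ^ 2 / 2 - Real.log m + m * (t - (m + 1 / m)) + (t - (m + 1 / m)) ^ 2 / 4 := by
  have hinv : m ≤ 1 / m := by rw [le_div_iff₀ hm]; nlinarith
  have hmi : m * (1 / m) = 1 := by field_simp
  rcases le_or_gt |t| 2 with h | h
  · have h1 := DD_nonneg hm hm1 one_pos le_rfl
    rw [Omega, if_pos h]
    simp only [DD, Real.log_one] at h1
    have ht := (abs_le.mp h).2
    nlinarith [mul_nonneg (sub_nonneg.mpr hinv) (sub_nonneg.mpr ht)]
  · obtain ⟨n, hn, hn1, e⟩ := exists_n h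
    have h1 := DD_nonneg hm hm1 hn hn1
    simp only [DD] at h1
    rw [← e, ← Omega_n hn hn1, ← e] at h1
    rcases abs_cases t with ⟨h2, h3⟩ | ⟨h2, h3⟩
    · rw [h2] at h1; linarith
    · rw [h2, Omega_neg] at h1
      nlinarith [mul_nonneg (sub_nonneg.mpr hinv) (show 0 ≤ -t by linarith)]

def hh (κ w : ℝ) : ℝ := w - 1 - Real.log w - κ * (1 - w) ^ 2 / w

lemma hh_deriv (κ : ℝ) {s : ℝ} (h0 : 0 < s) : HasDerivAt (hh κ)
    ((1 - s) / s ^ 2 * (κ * (1 + s) - s)) s := by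
  have h2 := (((hasDerivAt_id s).sub_const 1).sub (Real.hasDerivAt_log h0.ne')).sub
    (((((hasDerivAt_id s).const_sub 1).pow 2).const_mul κ).div (hasDerivAt_id s) h0.ne')
  refine (h2.congr_deriv ?_).congr_of_eventuallyEq ?_
  · simp only [id, Pi.pow_apply]; field_simp; ring
  · filter_upwards with x; simp [hh]

lemma hh_one (κ : ℝ) : hh κ 1 = 0 := by simp [hh]

lemma hh_mono {κ p q : ℝ} (hp : 0 < p) (hq : q ≤ 1) (hL : ∀ s, 0 < s → s < q → 0 < κ * (1 + s) - s) :
    StrictMonoOn (hh κ) (Icc p q) := by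
  apply strictMonoOn_of_deriv_pos (convex_Icc _ _)
  · intro x hx; exact (hh_deriv κ (by linarith [hx.1])).continuousAt.continuousWithinAt
  · intro x hx; rw [interior_Icc] at hx
    have hx0 : 0 < x := by linarith [hx.1]
    rw [(hh_deriv κ hx0).deriv]
    have := hL x hx0 hx.2
    have : 0 < 1 - x := by linarith [hx.2]
    positivity

lemma hh_anti {κ p : ℝ} (hp : 0 < p) (hL : ∀ s, p < s → s < 1 → κ * (1 + s) - s < 0) :
    StrictAntiOn (hh κ) (Icc p 1) := by
  apply strictAntiOn_of_deriv_neg (convex_Icc _ _)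
  · intro x hx; exact (hh_deriv κ (by linarith [hx.1])).continuousAt.continuousWithinAt
  · intro x hx; rw [interior_Icc] at hx
    have hx0 : 0 < x := by linarith [hx.1]
    rw [(hh_deriv κ hx0).deriv]
    have := hL x hx.1 hx.2
    have : 0 < 1 - x := by linarith [hx.2]
    apply mul_neg_of_pos_of_neg (by positivity) (hL x hx.1 hx.2)

lemma hh_sign {κ w : ℝ} (hκ : 0 < κ) (hw : 0 < w) (hw1 : w < 1) (h : hh κ w = 0) :
    (∀ s, 0 < s → s < w → hh κ s < 0) ∧ (∀ s, w < s → s < 1 → 0 < hh κ s) := by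
  have hk : κ < 1 / 2 := by
    by_contra hk
    push Not at hk
    have := hh_mono (κ := κ) hw le_rfl (fun s h0 h1 => by nlinarith)
      (left_mem_Icc.mpr hw1.le) (right_mem_Icc.mpr hw1.le) hw1
    rw [h, hh_one] at this; exact lt_irrefl _ this
  have hk1 : 0 < 1 - κ := by linarith
  set z := κ / (1 - κ) with hz
  have hz0 : 0 < z := by positivity
  have hz1 : z < 1 := by rw [hz, div_lt_one hk1]; linarith
  have hzk : z * (1 - κ) = κ := by rw [hz]; field_simp
  have hL1 : ∀ s, s < z → 0 < κ * (1 + s) - s := fun s h1 => by nlinarith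
  have hL2 : ∀ s, z < s → κ * (1 + s) - s < 0 := fun s h1 => by nlinarith
  have hA := hh_anti (κ := κ) hz0 (fun s h1 _ => hL2 s h1)
  have hpos : ∀ s, z ≤ s → s < 1 → 0 < hh κ s := fun s h1 h2 => by
    have := hA ⟨h1, h2.le⟩ (right_mem_Icc.mpr hz1.le) h2
    rwa [hh_one] at this
  have hwz : w < z := by
    by_contra hc; push Not at hc
    have := hpos w hc hw1; linarith
  constructor
  · intro s h0 h1
    have := hh_mono (κ := κ) h0 hz1.le (fun s _ h => hL1 s h) (left_mem_Icc.mpr (by linarith))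
      ⟨h1.le, hwz.le⟩ h1
    linarith
  · intro s h0 h1
    rcases le_total z s with h2 | h2
    · exact hpos s h2 h1
    · have := hh_mono (κ := κ) hw hz1.le (fun s _ h => hL1 s h) (left_mem_Icc.mpr hwz.le)
        ⟨h0.le, h2⟩ h0
      linarith

lemma hh_neg_small {κ c : ℝ} (hκ : 0 < κ) (hc : 0 < c) : ∃ s, 0 < s ∧ s < c ∧ hh κ s < 0 := by
  obtain ⟨σ, h0, h1⟩ : ∃ σ : ℝ, 0 < σ ∧ σ < min (1/2) (min (κ/4) c) :=
    exists_between (by positivity)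
  have a1 := lt_of_lt_of_le h1 (min_le_left _ _)
  have a2 := lt_of_lt_of_le h1 ((min_le_right _ _).trans (min_le_left _ _))
  have a3 := lt_of_lt_of_le h1 ((min_le_right _ _).trans (min_le_right _ _))
  refine ⟨σ ^ 2, by positivity, by nlinarith, ?_⟩
  have hl : Real.log σ⁻¹ ≤ σ⁻¹ - 1 := Real.log_le_sub_one_of_pos (by positivity)
  rw [Real.log_inv] at hl
  rw [hh, Real.log_pow]
  have e : κ * (1 - σ ^ 2) ^ 2 / σ ^ 2 ≥ 2 * σ⁻¹ := by
    rw [ge_iff_le, le_div_iff₀ (by positivity)]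
    rw [show 2 * σ⁻¹ * σ ^ 2 = 2 * σ by field_simp]
    have : (1:ℝ)/2 ≤ (1 - σ^2)^2 := by nlinarith
    nlinarith
  push_cast
  nlinarith

structure Root (v b a w : ℝ) : Prop where
  w0 : 0 < w
  wl : w < b / a
  h : hh (v / b) w = 0

lemma exists_root {v b a : ℝ} (hB : Basic v b a)
    (hG : 0 < Real.log (a / b) - (a + b) * (a * v + b ^ 2 - b * v) / (a * b ^ 2)) :
    ∃ w, Root v b a w := by
  have hb := hB.b0
  have hba := hB.ba
  have ha : 0 < a := by linarith
  have hv := hB.v0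
  have h1 : 0 < hh (v / b) (b / a) := by
    have e : hh (v / b) (b / a) = Real.log (a / b) - (a - b) * (a * v + b ^ 2 - b * v) / (a * b ^ 2) := by
      rw [hh, ← inv_div a b, Real.log_inv]
      field_simp; ring
    rw [e]
    have : (a + b) * (a * v + b ^ 2 - b * v) / (a * b ^ 2) - (a - b) * (a * v + b ^ 2 - b * v) / (a * b ^ 2)
      = 2 * b * ((a - b) * v + b ^ 2) / (a * b ^ 2) := by ring
    have h2 : 0 < a - b := by linarith
    have : 0 < 2 * b * ((a - b) * v + b ^ 2) / (a * b ^ 2) := by positivity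
    linarith
  obtain ⟨s, hs0, hs1, hs2⟩ := hh_neg_small (κ := v / b) (c := b / a) (by positivity) (by positivity)
  have hc : ContinuousOn (hh (v / b)) (Icc s (b / a)) := fun x hx =>
    (hh_deriv _ (by linarith [hx.1])).continuousAt.continuousWithinAt
  obtain ⟨w, hw, hw0⟩ := intermediate_value_Ioo hs1.le hc ⟨hs2, h1⟩
  exact ⟨w, by linarith [hw.1], hw.2, hw0⟩

def Th (v b a u x : ℝ) : ℝ := 1 / 2 + 1 / 2 * Real.log (a / b)
  - 1 / 2 * (((a + b) * u ^ 2 - 2 * b * u * x + v * x ^ 2) / (v * (a + b) - b ^ 2))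
  + Omega (x / Real.sqrt a)

lemma Theta_eq {γ : ℕ → ℝ} (hB : Basic (SW om0 γ 1) (SW om1 γ 1) (SW om2 γ 1)) (u x : ℝ) :
    Theta γ 1 u x = Th (SW om0 γ 1) (SW om1 γ 1) (SW om2 γ 1) u x := by
  have hd := hB.det.ne'
  have h1 : ![u, x] ⬝ᵥ ((SigmaQ γ 1)⁻¹ *ᵥ ![u, x]) =
    (((SW om2 γ 1 + SW om1 γ 1) * u ^ 2 - 2 * SW om1 γ 1 * u * x + SW om0 γ 1 * x ^ 2) /
      (SW om0 γ 1 * (SW om2 γ 1 + SW om1 γ 1) - SW om1 γ 1 ^ 2)) := by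
    rw [SigmaQ, Matrix.inv_def, Matrix.adjugate_fin_two_of, Matrix.det_fin_two_of]
    simp only [nuF_eq, nuD1_eq, nuD2_eq, one_pow, one_mul, Ring.inverse_eq_inv']
    simp [Matrix.mulVec, dotProduct, Fin.sum_univ_two]
    have hd' : SW om0 γ 1 * (SW om2 γ 1 + SW om1 γ 1) - SW om1 γ 1 * SW om1 γ 1 ≠ 0 := by
      rwa [← sq]
    rw [← sq] at *
    field_simp
    ring
  rw [Theta, h1, Th]
  simp only [nuD1_eq, nuD2_eq, one_pow, one_mul]

def bet (b w : ℝ) : ℝ := Real.sqrt (w / b)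
def alp (b w : ℝ) : ℝ := 1 / (bet b w * b) - bet b w
def EE (v b w : ℝ) : ℝ := alp b w * v + bet b w * b
def XX (b a w : ℝ) : ℝ := a * bet b w + 1 / bet b w

section
variable {v b a w : ℝ}

lemma Root.w1 (hB : Basic v b a) (hR : Root v b a w) : w < 1 := by
  have ha : 0 < a := hB.b0.trans hB.ba
  have := hR.wl
  have h2 : b / a < 1 := by rw [div_lt_one ha]; exact hB.ba
  linarith

lemma bet_pos (hB : Basic v b a) (hR : Root v b a w) : 0 < bet b w :=
  Real.sqrt_pos.mpr (div_pos hR.w0 hB.b0)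

lemma bet_sq (hB : Basic v b a) (hR : Root v b a w) : bet b w ^ 2 = w / b :=
  Real.sq_sqrt (div_pos hR.w0 hB.b0).le

lemma alp_pos (hB : Basic v b a) (hR : Root v b a w) : 0 < alp b w := by
  have h1 := bet_pos hB hR
  have hb := hB.b0
  have h2 : bet b w ^ 2 * b < 1 := by
    rw [bet_sq hB hR]; have := hR.w1 hB; field_simp; linarith
  rw [alp, sub_pos, lt_div_iff₀ (by positivity)]
  nlinarith

lemma XX_eq (hB : Basic v b a) (hR : Root v b a w) :
    XX b a w = alp b w * b + bet b w * (a + b) := by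
  have h1 := bet_pos hB hR
  have hb := hB.b0
  rw [XX, alp]; field_simp; ring

lemma k_lt (hB : Basic v b a) (hR : Root v b a w) : a * bet b w ^ 2 < 1 := by
  have hb := hB.b0
  have ha : 0 < a := hB.b0.trans hB.ba
  have := hR.wl
  rw [bet_sq hB hR]
  rw [lt_div_iff₀ ha] at this
  rw [← mul_div_assoc, div_lt_one hb]; linarith

lemma XX_div (hB : Basic v b a) (hR : Root v b a w) :
    XX b a w / Real.sqrt a = (Real.sqrt a * bet b w) + 1 / (Real.sqrt a * bet b w) := by
  have ha : 0 < a := hB.b0.trans hB.ba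
  have h1 := bet_pos hB hR
  have h2 := Real.sq_sqrt ha.le
  have h3 := Real.sqrt_pos.mpr ha
  rw [XX]; field_simp; rw [h2]; ring

lemma m_facts (hB : Basic v b a) (hR : Root v b a w) :
    0 < Real.sqrt a * bet b w ∧ Real.sqrt a * bet b w ≤ 1 ∧
    (Real.sqrt a * bet b w) ^ 2 = a * bet b w ^ 2 := by
  have ha : 0 < a := hB.b0.trans hB.ba
  have h1 := bet_pos hB hR
  have h3 := Real.sqrt_pos.mpr ha
  have h2 : (Real.sqrt a * bet b w) ^ 2 = a * bet b w ^ 2 := by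
    rw [mul_pow, Real.sq_sqrt ha.le]
  have h4 := k_lt hB hR
  exact ⟨by positivity, by nlinarith [mul_pos h3 h1], h2⟩

lemma Omega_XX (hB : Basic v b a) (hR : Root v b a w) :
    Omega (XX b a w / Real.sqrt a) = a * bet b w ^ 2 / 2 - 1 / 2 * Real.log (a * bet b w ^ 2) := by
  obtain ⟨h1, h2, h3⟩ := m_facts hB hR
  rw [XX_div hB hR, Omega_n h1 h2, h3, ← h3, Real.log_pow]; push_cast; ring

lemma qf_XX (hB : Basic v b a) (hR : Root v b a w) :
    ((a + b) * EE v b w ^ 2 - 2 * b * EE v b w * XX b a w + v * XX b a w ^ 2) / (v * (a + b) - b ^ 2)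
     = alp b w ^ 2 * v + 2 * alp b w * bet b w * b + bet b w ^ 2 * (a + b) := by
  rw [XX_eq hB hR, EE, div_eq_iff hB.det.ne']; ring

lemma Th_zero (hB : Basic v b a) (hR : Root v b a w) :
    1 / 2 + 1 / 2 * Real.log (a / b) - 1 / 2 * (((a + b) * EE v b w ^ 2 - 2 * b * EE v b w * XX b a w + v * XX b a w ^ 2) / (v * (a + b) - b ^ 2)) + Omega (XX b a w / Real.sqrt a) = 0 := by
  have hb := hB.b0
  have ha : 0 < a := hB.b0.trans hB.ba
  have hw := hR.w0
  have hβ := bet_pos hB hR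
  have e2 := bet_sq hB hR
  rw [qf_XX hB hR, Omega_XX hB hR]
  have h1 : alp b w * bet b w * b = 1 - w := by
    have : alp b w * bet b w * b = 1 - bet b w ^ 2 * b := by rw [alp]; field_simp
    rw [this, e2]; field_simp
  have h2 : alp b w ^ 2 * v = v / b * (1 - w) ^ 2 / w := by
    rw [← h1]
    have : w = bet b w ^ 2 * b := by rw [e2]; field_simp
    rw [eq_div_iff hw.ne']
    nth_rewrite 2 [this]
    field_simp
  have h3 : 2 * alp b w * bet b w * b = 2 * (1 - w) := by rw [← h1]; ring
  rw [h2, h3, e2]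
  have hl : Real.log (a * (w / b)) = Real.log (a / b) + Real.log w := by
    rw [← Real.log_mul (by positivity) hw.ne']; congr 1; ring
  rw [hl]
  have hhw := hR.h
  rw [hh] at hhw
  have : w / b * (a + b) = a * (w / b) + w := by field_simp
  rw [this]
  linarith

lemma Th_tangent (hB : Basic v b a) (hR : Root v b a w) (u x : ℝ) :
    Th v b a u x ≤ alp b w * (u + EE v b w)
      - (1 / (2 * (a + b)) - 1 / (4 * a)) * (x + XX b a w) ^ 2 := by
  have hb := hB.b0
  have ha : 0 < a := hB.b0.trans hB.ba
  have hd := hB.det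
  obtain ⟨h1, h2, h3⟩ := m_facts hB hR
  have hs := Real.sqrt_pos.mpr ha
  have hs2 := Real.sq_sqrt ha.le
  have hO := Omega_tangent h1 h2 (-(x / Real.sqrt a))
  rw [Omega_neg, ← XX_div hB hR] at hO
  have hO2 := Omega_n h1 h2
  rw [← XX_div hB hR] at hO2
  rw [← hO2] at hO
  have e1 : Real.sqrt a * bet b w * (-(x / Real.sqrt a) - XX b a w / Real.sqrt a)
    = - bet b w * (x + XX b a w) := by field_simp; ring
  have e2 : (-(x / Real.sqrt a) - XX b a w / Real.sqrt a) ^ 2 / 4 = (x + XX b a w) ^ 2 / (4 * a) := by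
    rw [show -(x / Real.sqrt a) - XX b a w / Real.sqrt a = -(x + XX b a w) / Real.sqrt a by ring,
      div_pow, hs2]; field_simp
  rw [e1, e2] at hO
  have hz := Th_zero hB hR
  have hqf : ((a + b) * u ^ 2 - 2 * b * u * x + v * x ^ 2) / (v * (a + b) - b ^ 2) =
    ((a + b) * EE v b w ^ 2 - 2 * b * EE v b w * XX b a w + v * XX b a w ^ 2) / (v * (a + b) - b ^ 2)
    - 2 * (alp b w * (u + EE v b w) + bet b w * (x + XX b a w))
    + ((x + XX b a w) ^ 2 / (a + b) + ((a + b) * (u + EE v b w) - b * (x + XX b a w)) ^ 2 / ((a + b) * (v * (a + b) - b ^ 2))) := by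
    rw [XX_eq hB hR, EE]
    have : a + b ≠ 0 := by positivity
    have hd' := hd.ne'
    obtain ⟨D, hD⟩ : ∃ D, D = v * (a + b) - b ^ 2 := ⟨_, rfl⟩
    rw [← hD] at hd' ⊢
    field_simp
    rw [hD]
    ring
  have hnn : 0 ≤ ((a + b) * (u + EE v b w) - b * (x + XX b a w)) ^ 2 / ((a + b) * (v * (a + b) - b ^ 2)) := by
    positivity
  rw [Th, hqf]
  have e3 : (1 / (2 * (a + b)) - 1 / (4 * a)) * (x + XX b a w) ^ 2 = 1/2 * ((x + XX b a w) ^ 2 / (a + b)) - (x + XX b a w) ^ 2 / (4 * a) := by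
    field_simp
  rw [e3]
  linarith

lemma coef_pos (hB : Basic v b a) : 0 < 1 / (2 * (a + b)) - 1 / (4 * a) := by
  have hb := hB.b0
  have hba := hB.ba
  have ha : 0 < a := hB.b0.trans hB.ba
  rw [sub_pos]; apply one_div_lt_one_div_of_lt <;> linarith

lemma Th_at (hB : Basic v b a) (hR : Root v b a w) : Th v b a (-EE v b w) (-XX b a w) = 0 := by
  rw [← Th_zero hB hR, Th, neg_div, Omega_neg]; ring

end

lemma E0_eq {γ : ℕ → ℝ} {w : ℝ} (hB : Basic (SW om0 γ 1) (SW om1 γ 1) (SW om2 γ 1))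
    (hR : Root (SW om0 γ 1) (SW om1 γ 1) (SW om2 γ 1) w) :
    E0 γ = EE (SW om0 γ 1) (SW om1 γ 1) w := by
  have hc := coef_pos hB
  have hα := alp_pos hB hR
  have hle : ∀ u x, Theta γ 1 u x ≤ alp (SW om1 γ 1) w * (u + EE (SW om0 γ 1) (SW om1 γ 1) w) := fun u x => by
    rw [Theta_eq hB]
    have := Th_tangent hB hR u x
    have := mul_nonneg hc.le (sq_nonneg (x + XX (SW om1 γ 1) (SW om2 γ 1) w))
    linarith
  have : IsLeast {E : ℝ | (⨆ x : ℝ, Theta γ 1 E x) = 0} (-EE (SW om0 γ 1) (SW om1 γ 1) w) := by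
    constructor
    · show (⨆ x : ℝ, Theta γ 1 (-EE (SW om0 γ 1) (SW om1 γ 1) w) x) = 0
      have hb : ∀ x, Theta γ 1 (-EE (SW om0 γ 1) (SW om1 γ 1) w) x ≤ 0 := fun x => by
        have := hle (-EE (SW om0 γ 1) (SW om1 γ 1) w) x
        simpa using this
      apply le_antisymm
      · exact ciSup_le hb
      · have h1 : Theta γ 1 (-EE (SW om0 γ 1) (SW om1 γ 1) w) (-XX (SW om1 γ 1) (SW om2 γ 1) w) = 0 := by
          rw [Theta_eq hB]; exact Th_at hB hR
        rw [← h1]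
        exact le_ciSup (f := fun x => Theta γ 1 (-EE (SW om0 γ 1) (SW om1 γ 1) w) x) ⟨0, by rintro _ ⟨x, rfl⟩; exact hb x⟩ _
    · intro u hu
      by_contra hlt
      push Not at hlt
      have hu' : (⨆ x : ℝ, Theta γ 1 u x) = 0 := hu
      have h1 := ciSup_le (hle u)
      rw [hu'] at h1
      nlinarith
  rw [E0, this.csInf_eq, neg_neg]

lemma x0_eq {γ : ℕ → ℝ} {w : ℝ} (hB : Basic (SW om0 γ 1) (SW om1 γ 1) (SW om2 γ 1))
    (hR : Root (SW om0 γ 1) (SW om1 γ 1) (SW om2 γ 1) w) :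
    x0 γ = XX (SW om1 γ 1) (SW om2 γ 1) w := by
  have hc := coef_pos hB
  have hle : ∀ x, Theta γ 1 (-EE (SW om0 γ 1) (SW om1 γ 1) w) x ≤ - ((1 / (2 * (SW om2 γ 1 + SW om1 γ 1)) - 1 / (4 * SW om2 γ 1)) * (x + XX (SW om1 γ 1) (SW om2 γ 1) w) ^ 2) := fun x => by
    rw [Theta_eq hB]
    have := Th_tangent hB hR (-EE (SW om0 γ 1) (SW om1 γ 1) w) x
    rw [neg_add_cancel, mul_zero] at this
    linarith
  have h1 : Theta γ 1 (-EE (SW om0 γ 1) (SW om1 γ 1) w) (-XX (SW om1 γ 1) (SW om2 γ 1) w) = 0 := by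
          rw [Theta_eq hB]; exact Th_at hB hR
  have : {x : ℝ | ∀ y : ℝ, Theta γ 1 (-(E0 γ)) y ≤ Theta γ 1 (-(E0 γ)) x} = {-XX (SW om1 γ 1) (SW om2 γ 1) w} := by
    rw [E0_eq hB hR]
    ext x
    simp only [mem_ofPred_eq, mem_singleton_iff]
    constructor
    · intro h
      have h2 := h (-XX (SW om1 γ 1) (SW om2 γ 1) w)
      rw [h1] at h2
      have h3 := h2.trans (hle x)
      by_contra hne
      have : x + XX (SW om1 γ 1) (SW om2 γ 1) w ≠ 0 := fun h => hne (by linarith)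
      have : 0 < (1 / (2 * (SW om2 γ 1 + SW om1 γ 1)) - 1 / (4 * SW om2 γ 1)) * (x + XX (SW om1 γ 1) (SW om2 γ 1) w) ^ 2 := by positivity
      linarith
    · rintro rfl y
      rw [h1]
      have := hle y
      have := mul_nonneg hc.le (sq_nonneg (y + XX (SW om1 γ 1) (SW om2 γ 1) w))
      linarith
  rw [x0, this, csSup_singleton, neg_neg]

def bdE (e b s1 s2 r : ℝ) : ℝ := b - e * (r ^ 2 * s1 - (1 - r ^ 2) * s2)
def MA (e v b s0 s1 s2 r : ℝ) : ℝ :=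
  v + e * (r ^ 2 * s0) - (1 - r ^ 2) * (r ^ 2 * s1 ^ 2) / bdE e b s1 s2 r
def MB (e b s1 s2 r : ℝ) : ℝ :=
  b + e * (r ^ 2 * s1) - (1 - r ^ 2) * (r ^ 2 * (s1 * (s1 + s2))) / bdE e b s1 s2 r
def MC (e b a s1 s2 r : ℝ) : ℝ :=
  a + b + e * (r ^ 2 * s2 + r ^ 2 * s1) - (1 - r ^ 2) * (r ^ 2 * (s1 + s2) ^ 2) / bdE e b s1 s2 r

/-- positivity data for the block form -/
def KPos (v b a s0 s1 s2 r : ℝ) : Prop := ∀ e : ℝ, (e = 1 ∨ e = -1) → ∀ α β t : ℝ,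
  ¬ (α = 0 ∧ β = 0 ∧ t = 0) → 0 < KQ e v b a s0 s1 s2 r α β t

section
variable {v b a s0 s1 s2 r e : ℝ}

lemma KPos.bd (h : KPos v b a s0 s1 s2 r) (hr : |r| < 1) (he : e = 1 ∨ e = -1) :
    0 < bdE e b s1 s2 r := by
  have h1 := h e he 0 0 1 (by simp)
  have hy : 0 < 1 - r ^ 2 := by
    have := (sq_lt_one_iff_abs_lt_one r).mpr hr; linarith
  have h2 : KQ e v b a s0 s1 s2 r 0 0 1 = (1 - r ^ 2) * bdE e b s1 s2 r := by
    simp only [KQ, bdE]; ring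
  rw [h2] at h1
  exact pos_of_mul_pos_right h1 hy.le

lemma KQ_complete (he : e = 1 ∨ e = -1) (hb : bdE e b s1 s2 r ≠ 0) (α β t : ℝ) :
    KQ e v b a s0 s1 s2 r α β t = α ^ 2 * MA e v b s0 s1 s2 r + 2 * α * β * MB e b s1 s2 r
      + β ^ 2 * MC e b a s1 s2 r
      + (1 - r ^ 2) * bdE e b s1 s2 r *
        (t + e * (r * (α * s1 + β * (s1 + s2))) / bdE e b s1 s2 r) ^ 2 := by
  have he2 : e ^ 2 = 1 := by rcases he with rfl | rfl <;> norm_num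
  unfold MA MB MC KQ
  have h1 : b - e * (r ^ 2 * s1 - (1 - r ^ 2) * s2) = bdE e b s1 s2 r := rfl
  rw [h1]
  generalize bdE e b s1 s2 r = D at *
  field_simp
  ring_nf
  rw [he2]
  ring

lemma KPos.quad (h : KPos v b a s0 s1 s2 r) (hr : |r| < 1) (he : e = 1 ∨ e = -1) (α β : ℝ)
    (hne : ¬ (α = 0 ∧ β = 0)) :
    0 < α ^ 2 * MA e v b s0 s1 s2 r + 2 * α * β * MB e b s1 s2 r + β ^ 2 * MC e b a s1 s2 r := by
  have hb := h.bd hr he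
  have := h e he α β (-(e * (r * (α * s1 + β * (s1 + s2))) / bdE e b s1 s2 r))
    (fun hh => hne ⟨hh.1, hh.2.1⟩)
  rw [KQ_complete he hb.ne'] at this
  simpa using this

lemma KPos.MA_pos (h : KPos v b a s0 s1 s2 r) (hr : |r| < 1) (he : e = 1 ∨ e = -1) :
    0 < MA e v b s0 s1 s2 r := by
  simpa using h.quad hr he 1 0 (by simp)

lemma KPos.det (h : KPos v b a s0 s1 s2 r) (hr : |r| < 1) (he : e = 1 ∨ e = -1) :
    0 < MA e v b s0 s1 s2 r * MC e b a s1 s2 r - MB e b s1 s2 r ^ 2 := by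
  have hA := h.MA_pos hr he
  have := h.quad hr he (MB e b s1 s2 r) (- MA e v b s0 s1 s2 r)
    (fun hh => hA.ne' (by linarith [hh.2]))
  have h2 : 0 < MA e v b s0 s1 s2 r * (MA e v b s0 s1 s2 r * MC e b a s1 s2 r - MB e b s1 s2 r ^ 2) := by
    linarith
  exact pos_of_mul_pos_right h2 hA.le

end

lemma two_zero {A B C p q : ℝ} (hd : A * C - B ^ 2 ≠ 0) (h1 : A * p + B * q = 0)
    (h2 : B * p + C * q = 0) : p = 0 ∧ q = 0 := by
  have e1 : (A * C - B ^ 2) * p = 0 := by linear_combination C * h1 - B * h2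
  have e2 : (A * C - B ^ 2) * q = 0 := by linear_combination A * h2 - B * h1
  exact ⟨(mul_eq_zero.mp e1).resolve_left hd, (mul_eq_zero.mp e2).resolve_left hd⟩

def BigM (Ap Am Bp Bm Cp Cm : ℝ) : Matrix (Fin 2 ⊕ Fin 2) (Fin 2 ⊕ Fin 2) ℝ :=
  Matrix.fromBlocks !![(Ap + Am) / 2, (Ap - Am) / 2; (Ap - Am) / 2, (Ap + Am) / 2]
    !![(Bp + Bm) / 2, (Bp - Bm) / 2; (Bp - Bm) / 2, (Bp + Bm) / 2]
    !![(Bp + Bm) / 2, (Bp - Bm) / 2; (Bp - Bm) / 2, (Bp + Bm) / 2]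
    !![(Cp + Cm) / 2, (Cp - Cm) / 2; (Cp - Cm) / 2, (Cp + Cm) / 2]

lemma BigM_qf {Ap Am Bp Bm Cp Cm : ℝ} (hp : Ap * Cp - Bp ^ 2 ≠ 0) (hm : Am * Cm - Bm ^ 2 ≠ 0)
    (u x : ℝ) :
    (Sum.elim ![u, u] ![x, x]) ⬝ᵥ ((BigM Ap Am Bp Bm Cp Cm)⁻¹ *ᵥ (Sum.elim ![u, u] ![x, x]))
      = 2 * ((Cp * u ^ 2 - 2 * Bp * u * x + Ap * x ^ 2) / (Ap * Cp - Bp ^ 2)) := by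
  have hdet : (BigM Ap Am Bp Bm Cp Cm).det ≠ 0 := by
    intro h0
    obtain ⟨z, hz, hz0⟩ := Matrix.exists_mulVec_eq_zero_iff.mpr h0
    apply hz
    have e0 := congrFun hz0 (Sum.inl 0)
    have e1 := congrFun hz0 (Sum.inl 1)
    have e2 := congrFun hz0 (Sum.inr 0)
    have e3 := congrFun hz0 (Sum.inr 1)
    simp [BigM, Matrix.mulVec, dotProduct, Fintype.sum_sum_type, Fin.sum_univ_two] at e0 e1 e2 e3
    have P := two_zero (p := z (Sum.inl 0) + z (Sum.inl 1)) (q := z (Sum.inr 0) + z (Sum.inr 1)) hp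
      (by linear_combination e0 + e1) (by linear_combination e2 + e3)
    have Q := two_zero (p := z (Sum.inl 0) - z (Sum.inl 1)) (q := z (Sum.inr 0) - z (Sum.inr 1)) hm
      (by linear_combination e0 - e1) (by linear_combination e2 - e3)
    funext i
    rcases i with i | i <;> fin_cases i <;> simp <;> linarith [P.1, P.2, Q.1, Q.2]
  have hz : (BigM Ap Am Bp Bm Cp Cm) *ᵥ (Sum.elim
      ![(Cp * u - Bp * x) / (Ap * Cp - Bp ^ 2), (Cp * u - Bp * x) / (Ap * Cp - Bp ^ 2)]
      ![(Ap * x - Bp * u) / (Ap * Cp - Bp ^ 2), (Ap * x - Bp * u) / (Ap * Cp - Bp ^ 2)])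
      = Sum.elim ![u, u] ![x, x] := by
    obtain ⟨D, hD⟩ : ∃ D, D = Ap * Cp - Bp ^ 2 := ⟨_, rfl⟩
    rw [← hD] at hp ⊢
    funext i
    rcases i with i | i <;> fin_cases i <;>
      simp [BigM, Matrix.mulVec, dotProduct, Fintype.sum_sum_type, Fin.sum_univ_two] <;>
      field_simp <;> rw [hD] <;> ring
  have hu : IsUnit (BigM Ap Am Bp Bm Cp Cm).det := isUnit_iff_ne_zero.mpr hdet
  nth_rewrite 2 [← hz]
  rw [Matrix.mulVec_mulVec, Matrix.nonsing_inv_mul _ hu, Matrix.one_mulVec]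
  simp [dotProduct, Fintype.sum_sum_type, Fin.sum_univ_two]
  ring

lemma SigmaUX_eq {γ : ℕ → ℝ} {r : ℝ}
    (h1 : bdE 1 (SW om1 γ 1) (SW om1 γ r) (SW om2 γ r) r ≠ 0)
    (h2 : bdE (-1) (SW om1 γ 1) (SW om1 γ r) (SW om2 γ r) r ≠ 0) :
    SigmaUX γ r 1 1 = BigM (MA 1 (SW om0 γ 1) (SW om1 γ 1) (SW om0 γ r) (SW om1 γ r) (SW om2 γ r) r)
      (MA (-1) (SW om0 γ 1) (SW om1 γ 1) (SW om0 γ r) (SW om1 γ r) (SW om2 γ r) r)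
      (MB 1 (SW om1 γ 1) (SW om1 γ r) (SW om2 γ r) r)
      (MB (-1) (SW om1 γ 1) (SW om1 γ r) (SW om2 γ r) r)
      (MC 1 (SW om1 γ 1) (SW om2 γ 1) (SW om1 γ r) (SW om2 γ r) r)
      (MC (-1) (SW om1 γ 1) (SW om2 γ 1) (SW om1 γ r) (SW om2 γ r) r) := by
  have hd : dA γ r 1 1 = r ^ 2 * SW om1 γ r - (1 - r ^ 2) * SW om2 γ r := by
    simp only [dA, nuD1_eq, nuD2_eq, mul_one, one_mul]; ring
  have hp : bdE 1 (SW om1 γ 1) (SW om1 γ r) (SW om2 γ r) r = SW om1 γ 1 - dA γ r 1 1 := by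
    rw [hd, bdE]; ring
  have hm : bdE (-1) (SW om1 γ 1) (SW om1 γ r) (SW om2 γ r) r = SW om1 γ 1 + dA γ r 1 1 := by
    rw [hd, bdE]; ring
  have ha2 : a2 γ r 1 1 = SW om1 γ 1 / ((SW om1 γ 1 - dA γ r 1 1) * (SW om1 γ 1 + dA γ r 1 1)) := by
    rw [a2]; simp only [nuD1_eq, one_pow, one_mul]; congr 1; ring
  have ha4 : a4 γ r 1 1 = -dA γ r 1 1 / ((SW om1 γ 1 - dA γ r 1 1) * (SW om1 γ 1 + dA γ r 1 1)) := by
    rw [a4]; simp only [nuD1_eq, one_pow, one_mul]; congr 1; ring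
  rw [hp] at h1
  rw [hm] at h2
  unfold MA MB MC
  rw [hp, hm]
  rw [SigmaUX, BigM]
  congr 1
  all_goals
    simp only [SigmaU, SigmaB, SigmaX, ha2, ha4, ups, nuF_eq, nuD1_eq, nuD2_eq, one_pow, one_mul, mul_one]
    generalize dA γ r 1 1 = D at *
    generalize SW om1 γ 1 = b at *
    ext i j
    fin_cases i <;> fin_cases j <;> simp <;> field_simp <;> ring

/-- The explicit form of Ψ⁰ in terms of scalar data. -/
def PsiE (v b a s0 s1 s2 r u x : ℝ) : ℝ :=
  1 + 1 / 2 * Real.log ((1 - r ^ 2) * a ^ 2 / (b ^ 2 - (r * s1) ^ 2))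
   - (MC 1 b a s1 s2 r * u ^ 2 - 2 * MB 1 b s1 s2 r * u * x + MA 1 v b s0 s1 s2 r * x ^ 2) /
     (MA 1 v b s0 s1 s2 r * MC 1 b a s1 s2 r - MB 1 b s1 s2 r ^ 2)
   + 2 * Omega (x / Real.sqrt a)

lemma kpos {γ : ℕ → ℝ} (hγ : GammaDecay γ) (hm : Mixed γ) {r : ℝ} (hr : |r| < 1) :
    KPos (SW om0 γ 1) (SW om1 γ 1) (SW om2 γ 1) (SW om0 γ r) (SW om1 γ r) (SW om2 γ r) r :=
  fun _ he _ _ _ h => KQ_pos hγ hm he hr h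

lemma Psi0_eq {γ : ℕ → ℝ} (hγ : GammaDecay γ) (hm : Mixed γ) {r : ℝ} (hr : |r| < 1) :
    Psi0 γ r = PsiE (SW om0 γ 1) (SW om1 γ 1) (SW om2 γ 1) (SW om0 γ r) (SW om1 γ r) (SW om2 γ r) r
      (E0 γ) (x0 γ) := by
  have hK := kpos hγ hm hr
  have hp := hK.det hr (Or.inl rfl)
  have hn := hK.det hr (Or.inr rfl)
  rw [Psi0, Psi, SigmaUX_eq (hK.bd hr (Or.inl rfl)).ne' (hK.bd hr (Or.inr rfl)).ne',
    BigM_qf hp.ne' hn.ne', PsiE]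
  simp only [nuD1_eq, nuD2_eq, one_pow, one_mul, neg_div, Omega_neg]
  rw [show SW om1 γ 1 * SW om1 γ 1 = SW om1 γ 1 ^ 2 by ring,
    show SW om2 γ 1 * SW om2 γ 1 = SW om2 γ 1 ^ 2 by ring]
  ring

def FF (k p : ℝ) : ℝ := 1 / 2 * ((1 + k) * (p - 1) / (k + p) - Real.log p)

lemma log_lower {s : ℝ} (h0 : 0 < s) (h1 : s ≤ 1) : (s - s⁻¹) ≤ 2 * Real.log s := by
  have h : Real.sinh (Real.log s) ≤ Real.log s :=
    Real.sinh_le_self_iff.mpr (Real.log_nonpos h0.le h1)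
  rw [Real.sinh_log h0] at h
  linarith

lemma FF_small {k p : ℝ} (hk : 0 < k) (hp : k ^ 2 ≤ p) (hp1 : p ≤ 1) :
    FF k p ≤ 0 ∧ (k ^ 2 < p → p < 1 → FF k p < 0) := by
  have hp0 : 0 < p := lt_of_lt_of_le (by positivity) hp
  obtain ⟨s, hs, rfl⟩ : ∃ s, 0 < s ∧ p = s ^ 2 := ⟨Real.sqrt p, Real.sqrt_pos.mpr hp0, (Real.sq_sqrt hp0.le).symm⟩
  have hs1 : s ≤ 1 := by nlinarith
  have hks : k ≤ s := by nlinarith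
  have hl := log_lower hs hs1
  have e : FF k (s ^ 2) = 1 / 2 * ((s - s⁻¹) - 2 * Real.log s)
      - 1 / 2 * ((1 - s ^ 2) * ((s - k) * (1 - s)) / ((k + s ^ 2) * s)) := by
    rw [FF, Real.log_pow]; push_cast; field_simp; ring
  have h2 : 0 ≤ 1 - s ^ 2 := by linarith
  have h3 : 0 ≤ s - k := by linarith
  have h4 : 0 ≤ 1 - s := by linarith
  constructor
  · rw [e]
    have : 0 ≤ (1 - s ^ 2) * ((s - k) * (1 - s)) / ((k + s ^ 2) * s) := by positivity
    linarith
  · intro h5 h6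
    rw [e]
    have h2 : 0 < 1 - s ^ 2 := by linarith
    have h3 : 0 < s - k := by nlinarith
    have h4 : 0 < 1 - s := by nlinarith
    have : 0 < (1 - s ^ 2) * ((s - k) * (1 - s)) / ((k + s ^ 2) * s) := by positivity
    linarith

lemma FF_nonpos {k p : ℝ} (hk : 0 < k) (hk1 : k < 1) (hp : k ^ 2 ≤ p) : FF k p ≤ 0 := by
  rcases le_total p 1 with h | h
  · exact (FF_small hk hp h).1
  · have h1 := Real.le_log_one_add_of_nonneg (x := p - 1) (by linarith)
    rw [show 1 + (p - 1) = p by ring, show p - 1 + 2 = p + 1 by ring] at h1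
    have : (1 + k) * (p - 1) / (k + p) ≤ 2 * (p - 1) / (p + 1) := by
      rw [div_le_div_iff₀ (by linarith) (by linarith)]
      nlinarith [mul_nonneg (sub_nonneg.mpr h) (mul_nonneg (sub_nonneg.mpr h) (sub_nonneg.mpr hk1.le))]
    rw [FF]; linarith

lemma FF_kk {k : ℝ} (hk : 0 < k) (hk1 : k < 1) : FF k k < 0 :=
  (FF_small hk (by nlinarith) hk1.le).2 (by nlinarith) hk1

def PP (b s1 r : ℝ) : ℝ := (b ^ 2 - (r * s1) ^ 2) / ((1 - r ^ 2) * b)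

section
variable {v b a s0 s1 s2 r w : ℝ}

lemma qf_dual {A B C u x : ℝ} (hA : 0 < A) (hd : 0 < A * C - B ^ 2) (w1 w2 : ℝ) :
    2 * (w1 * u + w2 * x) - (w1 ^ 2 * A + 2 * w1 * w2 * B + w2 ^ 2 * C) ≤
      (C * u ^ 2 - 2 * B * u * x + A * x ^ 2) / (A * C - B ^ 2) := by
  rw [le_div_iff₀ hd]
  obtain ⟨D, hD⟩ : ∃ D, D = A * C - B ^ 2 := ⟨_, rfl⟩
  have key : A * (C * u ^ 2 - 2 * B * u * x + A * x ^ 2 -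
    (2 * (w1 * u + w2 * x) - (w1 ^ 2 * A + 2 * w1 * w2 * B + w2 ^ 2 * C)) * (A * C - B ^ 2))
    = (A * C - B ^ 2) * (A * w1 + B * w2 - u) ^ 2 + ((A * C - B ^ 2) * w2 - (A * x - B * u)) ^ 2 := by ring
  have : 0 ≤ A * (C * u ^ 2 - 2 * B * u * x + A * x ^ 2 -
    (2 * (w1 * u + w2 * x) - (w1 ^ 2 * A + 2 * w1 * w2 * B + w2 ^ 2 * C)) * (A * C - B ^ 2)) := by
    rw [key]; positivity
  have := nonneg_of_mul_nonneg_right this hA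
  linarith

lemma KQ_split (hb : b ≠ 0) (hy : 1 - r ^ 2 ≠ 0) (α β g : ℝ) :
    1 / 2 * (α ^ 2 * v + 2 * α * β * b + β ^ 2 * (a + b))
      - 2 * (α / 2 * (α * v + β * b) + (β + g) / 2 * (α * b + β * (a + b)))
      + KQ 1 v b a s0 s1 s2 r (α / 2) ((β + g) / 2)
        ((-(g * (r * s1) / (b * (1 - r ^ 2))) + -(g * r / (1 - r ^ 2))) / 2)
    = - g * (α * b + β * (a + b)) + 1 / 2 * g ^ 2 * (a + PP b s1 r)
      - KQ (-1) v b a s0 s1 s2 r (α / 2) ((β - g) / 2)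
        ((-(g * (r * s1) / (b * (1 - r ^ 2))) - -(g * r / (1 - r ^ 2))) / 2) := by
  unfold KQ PP
  obtain ⟨y, hD⟩ : ∃ y, y = 1 - r ^ 2 := ⟨_, rfl⟩
  rw [← hD] at hy ⊢
  field_simp
  have hr : r ^ 2 = 1 - y := by linarith
  ring_nf
  have hr3 : r ^ 3 = r * (1 - y) := by rw [← hr]; ring
  have hr4 : r ^ 4 = (1 - y) ^ 2 := by rw [← hr]; ring
  rw [hr4, hr]
  ring

lemma PsiE_lt (hB : Basic v b a) (hR : Root v b a w) (hK : KPos v b a s0 s1 s2 r) (hr : |r| < 1)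
    (hs : |s1| ≤ b) :
    0 < PP b s1 r ∧
    PsiE v b a s0 s1 s2 r (EE v b w) (XX b a w) <
      1 / 2 * (1 + a * bet b w ^ 2 - Real.log (bet b w ^ 2 * PP b s1 r)
        - (1 + a * bet b w ^ 2) ^ 2 / (a * bet b w ^ 2 + bet b w ^ 2 * PP b s1 r)) := by
  have hb := hB.b0
  have ha : 0 < a := hB.b0.trans hB.ba
  have hy : 0 < 1 - r ^ 2 := by
    have := (sq_lt_one_iff_abs_lt_one r).mpr hr; linarith
  have hn1 : 0 < b ^ 2 - (r * s1) ^ 2 := by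
    have : |r * s1| < b := by
      rw [abs_mul]
      calc |r| * |s1| ≤ |r| * b := by gcongr
        _ < 1 * b := by gcongr
        _ = b := one_mul b
    have := sq_lt_sq' (by linarith [(abs_lt.mp this).1]) (abs_lt.mp this).2
    linarith
  have hP : 0 < PP b s1 r := by unfold PP; positivity
  refine ⟨hP, ?_⟩
  have hβ := bet_pos hB hR
  have hα := alp_pos hB hR
  set P := PP b s1 r with hPd
  set β := bet b w with hβd
  set α := alp b w with hαd
  set X := XX b a w with hXd
  have hXe : X = α * b + β * (a + b) := XX_eq hB hR
  have hEe : EE v b w = α * v + β * b := rfl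
  set g := X / (a + P) with hg
  have hA := hK.MA_pos hr (e := 1) (Or.inl rfl)
  have hD := hK.det hr (e := 1) (Or.inl rfl)
  have h1 := qf_dual (u := EE v b w) (x := X) hA hD (α / 2) ((β + g) / 2)
  have h2 := KQ_complete (v := v) (a := a) (s0 := s0) (Or.inl rfl) (hK.bd hr (e := 1) (Or.inl rfl)).ne' (α / 2) ((β + g) / 2)
        ((-(g * (r * s1) / (b * (1 - r ^ 2))) + -(g * r / (1 - r ^ 2))) / 2)
  have h3 : 0 ≤ (1 - r ^ 2) * bdE 1 b s1 s2 r *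
        (((-(g * (r * s1) / (b * (1 - r ^ 2))) + -(g * r / (1 - r ^ 2))) / 2) + 1 * (r * (α / 2 * s1 + (β + g) / 2 * (s1 + s2))) / bdE 1 b s1 s2 r) ^ 2 := by
    have := hK.bd hr (e := 1) (Or.inl rfl)
    positivity
  have h4 := hK (-1) (Or.inr rfl) (α / 2) ((β - g) / 2)
        ((-(g * (r * s1) / (b * (1 - r ^ 2))) - -(g * r / (1 - r ^ 2))) / 2)
        (fun h => hα.ne' (by linarith [h.1]))
  have h5 := KQ_split (v := v) (a := a) (s0 := s0) (s1 := s1) (s2 := s2) hb.ne' hy.ne' α β g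
  rw [← hXe, ← hEe] at h5
  have h6 := Th_zero hB hR
  rw [qf_XX hB hR, Omega_XX hB hR] at h6
  rw [PsiE, Omega_XX hB hR]
  have hl1 : Real.log ((1 - r ^ 2) * a ^ 2 / (b ^ 2 - (r * s1) ^ 2)) =
      Real.log (a / b) + Real.log (a * β ^ 2) - Real.log (β ^ 2 * P) := by
    rw [← Real.log_mul (by positivity) (by positivity), ← Real.log_div (by positivity) (by positivity)]
    congr 1
    rw [hPd, PP]
    field_simp
  rw [hl1]
  have hg2 : - g * X + 1 / 2 * g ^ 2 * (a + P) = - (1 / 2) * ((1 + a * β ^ 2) ^ 2 / (a * β ^ 2 + β ^ 2 * P)) := by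
    have : X = (1 + a * β ^ 2) / β := by rw [hXd, XX, ← hβd]; field_simp; ring
    rw [hg, this]
    have : a + P ≠ 0 := by positivity
    field_simp
    ring
  linarith

end

lemma kcond (k p : ℝ) (h : k + p ≠ 0) : 1 / 2 * (1 + k - Real.log p - (1 + k) ^ 2 / (k + p)) = FF k p := by
  rw [FF]; field_simp; ring

/-- ‖power‖ differences -/
lemma pow_lip {e r : ℝ} (he : |e| ≤ 1) (hr : |r| ≤ 1) (m : ℕ) : |e ^ m - r ^ m| ≤ m * |e - r| := by
  induction m with
  | zero => simp
  | succ m ih =>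
    have : e ^ (m+1) - r ^ (m+1) = e * (e ^ m - r ^ m) + (e - r) * r ^ m := by ring
    rw [this]
    have h1 : |r ^ m| ≤ 1 := by rw [abs_pow]; exact pow_le_one₀ (abs_nonneg _) hr
    calc _ ≤ |e * (e ^ m - r ^ m)| + |(e - r) * r ^ m| := abs_add_le _ _
      _ = |e| * |e ^ m - r ^ m| + |e - r| * |r ^ m| := by rw [abs_mul, abs_mul]
      _ ≤ 1 * (m * |e - r|) + |e - r| * 1 := by gcongr
      _ = _ := by push_cast; ring

lemma pow_low {ρ : ℝ} (h0 : 0 ≤ ρ) (h1 : ρ ≤ 1) (n : ℕ) :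
    (1 - ρ) * (((n : ℝ) + 1) * ρ ^ n) ≤ 1 - ρ ^ (n + 1) := by
  induction n with
  | zero => simp
  | succ n ih =>
    have h2 : ρ ^ (n+1) ≤ 1 := pow_le_one₀ h0 h1
    have h3 := mul_le_mul_of_nonneg_left ih h0
    have : (1 - ρ) * ((((n+1:ℕ) : ℝ) + 1) * ρ ^ (n+1)) = ρ * ((1 - ρ) * (((n : ℝ) + 1) * ρ ^ n)) + (1 - ρ) * ρ ^ (n+1) := by
      push_cast; ring
    rw [this]
    have h4 : ρ * (1 - ρ ^ (n+1)) = ρ - ρ ^ (n+2) := by ring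
    have h5 : (1 - ρ) * ρ ^ (n+1) ≤ (1 - ρ) * 1 := mul_le_mul_of_nonneg_left h2 (by linarith)
    rw [show n + 1 + 1 = n + 2 from rfl]
    linarith

section
variable {γ : ℕ → ℝ}

lemma D1_low (hγ : GammaDecay γ) {ρ : ℝ} (h0 : 0 ≤ ρ) (h1 : ρ ≤ 1) :
    (1 - ρ) * SW om2 γ ρ ≤ SW om1 γ 1 - ρ * SW om1 γ ρ := by
  have hρ : |ρ| ≤ 1 := by rwa [abs_of_nonneg h0]
  refine hasSum_le ?_ ((SW_hasSum wt2 hγ hρ).mul_left (1 - ρ))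
    ((SW_hasSum wt1 hγ (r := 1) (by simp)).sub ((SW_hasSum wt1 hγ hρ).mul_left ρ))
  intro n
  have := pow_low h0 h1 n
  have h2 : 0 ≤ γ (n+2) ^ 2 * ((n:ℝ) + 2) := by positivity
  have h3 := mul_le_mul_of_nonneg_left this h2
  simp only [om1, om2, one_pow, mul_one]
  calc _ = γ (n+2) ^ 2 * ((n:ℝ) + 2) * ((1 - ρ) * (((n : ℝ) + 1) * ρ ^ n)) := by ring
    _ ≤ _ := h3
    _ = _ := by ring

lemma D1_lip (hγ : GammaDecay γ) {e r : ℝ} (he : |e| ≤ 1) (hr : |r| ≤ 1) :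
    |e * SW om1 γ e - r * SW om1 γ r| ≤ SW om2 γ 1 * |e - r| := by
  refine HasSum.norm_le_of_bounded (((SW_hasSum wt1 hγ he).mul_left e).sub ((SW_hasSum wt1 hγ hr).mul_left r))
    ((SW_hasSum wt2 hγ (r := 1) (by simp)).mul_right |e - r|) ?_
  intro n
  have := pow_lip he hr (n + 1)
  have h2 : 0 ≤ γ (n+2) ^ 2 * ((n:ℝ) + 2) := by positivity
  have h3 := mul_le_mul_of_nonneg_left this h2
  simp only [om1, om2, one_pow, mul_one, Real.norm_eq_abs]
  rw [show e * (γ (n + 2) ^ 2 * (↑n + 2) * e ^ n) - r * (γ (n + 2) ^ 2 * (↑n + 2) * r ^ n) = (γ (n+2) ^ 2 * ((n:ℝ) + 2)) * (e ^ (n+1) - r ^ (n+1)) by ring, abs_mul, abs_of_nonneg h2]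
  refine h3.trans (le_of_eq ?_)
  push_cast; ring

lemma SW_abs {ω : ℕ → ℝ} (hω : Wt ω) (hγ : GammaDecay γ) {r : ℝ} (hr : |r| ≤ 1) : |SW ω γ r| ≤ SW ω γ |r| := by
  refine HasSum.norm_le_of_bounded (SW_hasSum hω hγ hr) (SW_hasSum hω hγ (r := |r|) (by rwa [abs_abs])) ?_
  intro n
  rw [Real.norm_eq_abs, abs_mul, abs_mul, abs_of_nonneg (sq_nonneg _), abs_of_nonneg (hω n).1, abs_pow]

def Plow (γ : ℕ → ℝ) (ρ : ℝ) : ℝ :=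
  SW om2 γ ρ * (SW om1 γ 1 + ρ * SW om1 γ ρ) / ((1 + ρ) * SW om1 γ 1)

lemma SW_nonneg {ω : ℕ → ℝ} (hω : Wt ω) (hγ : GammaDecay γ) {r : ℝ} (h0 : 0 ≤ r) (hr : r ≤ 1) : 0 ≤ SW ω γ r := by
  have := (abs_nonneg _).trans (SW_abs hω hγ (r := r) (by rwa [abs_of_nonneg h0]))
  rwa [abs_of_nonneg h0] at this

lemma Plow_le (hγ : GammaDecay γ) (hb : 0 < SW om1 γ 1) {r : ℝ} (hr : |r| < 1) :
    Plow γ |r| ≤ PP (SW om1 γ 1) (SW om1 γ r) r := by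
  have h0 := abs_nonneg r
  have hy : (1 - r ^ 2) = (1 - |r|) * (1 + |r|) := by rw [← sq_abs]; ring
  have h1 := SW_abs wt1 hγ hr.le
  have h2 := D1_low hγ h0 hr.le
  have h3 := SW_nonneg wt1 hγ h0 hr.le
  have h5 : 0 < 1 - |r| := by linarith
  unfold Plow PP
  rw [hy, div_le_div_iff₀ (by positivity) (by positivity)]
  have h4 : (r * SW om1 γ r) ^ 2 ≤ (|r| * SW om1 γ |r|) ^ 2 := by
    rw [← sq_abs, abs_mul]; gcongr
  have h6 : (1 - |r|) * SW om2 γ |r| * (SW om1 γ 1 + |r| * SW om1 γ |r|) ≤ (SW om1 γ 1 - |r| * SW om1 γ |r|) * (SW om1 γ 1 + |r| * SW om1 γ |r|) := by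
    gcongr
  have h7 : (1 - |r|) * SW om2 γ |r| * (SW om1 γ 1 + |r| * SW om1 γ |r|) ≤ SW om1 γ 1 ^ 2 - (r * SW om1 γ r) ^ 2 := by
    nlinarith
  have h8 := mul_le_mul_of_nonneg_right h7 (show 0 ≤ (1 + |r|) * SW om1 γ 1 by positivity)
  linarith

end

section
variable {γ : ℕ → ℝ} {w r : ℝ}

lemma Psi0_eq' (hγ : GammaDecay γ) (hm : Mixed γ) (hR : Root (SW om0 γ 1) (SW om1 γ 1) (SW om2 γ 1) w)
    (hr : |r| < 1) :
    Psi0 γ r = PsiE (SW om0 γ 1) (SW om1 γ 1) (SW om2 γ 1) (SW om0 γ r) (SW om1 γ r) (SW om2 γ r) r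
      (EE (SW om0 γ 1) (SW om1 γ 1) w) (XX (SW om1 γ 1) (SW om2 γ 1) w) := by
  have hB := mixed_basic hγ hm
  rw [Psi0_eq hγ hm hr, E0_eq hB hR, x0_eq hB hR]

lemma Psi0_bound (hγ : GammaDecay γ) (hm : Mixed γ) (hR : Root (SW om0 γ 1) (SW om1 γ 1) (SW om2 γ 1) w)
    (hr : |r| < 1) :
    0 < PP (SW om1 γ 1) (SW om1 γ r) r ∧
    Psi0 γ r < FF (SW om2 γ 1 * bet (SW om1 γ 1) w ^ 2) (bet (SW om1 γ 1) w ^ 2 * PP (SW om1 γ 1) (SW om1 γ r) r) ∧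
    Psi0 γ r < 1 / 2 * (1 + SW om2 γ 1 * bet (SW om1 γ 1) w ^ 2 -
      Real.log (bet (SW om1 γ 1) w ^ 2 * PP (SW om1 γ 1) (SW om1 γ r) r)) := by
  have hB := mixed_basic hγ hm
  have hb := hB.b0
  have ha := hB.b0.trans hB.ba
  have hβ := bet_pos hB hR
  obtain ⟨h1, h2⟩ := PsiE_lt hB hR (kpos hγ hm hr) hr (SW_mono wt1 hγ hr.le)
  rw [← Psi0_eq' hγ hm hR hr] at h2
  refine ⟨h1, ?_, ?_⟩
  · rw [kcond _ _ (by positivity)] at h2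
    exact h2
  · refine h2.trans_le ?_
    have : 0 ≤ (1 + SW om2 γ 1 * bet (SW om1 γ 1) w ^ 2) ^ 2 / (SW om2 γ 1 * bet (SW om1 γ 1) w ^ 2 +
      bet (SW om1 γ 1) w ^ 2 * PP (SW om1 γ 1) (SW om1 γ r) r) := by positivity
    linarith

lemma Psi0_neg_of_Plow (hγ : GammaDecay γ) (hm : Mixed γ) (hR : Root (SW om0 γ 1) (SW om1 γ 1) (SW om2 γ 1) w)
    (hr : |r| < 1) (hP : SW om2 γ 1 * (SW om2 γ 1 * (w / SW om1 γ 1)) ≤ Plow γ |r|) : Psi0 γ r < 0 := by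
  have hB := mixed_basic hγ hm
  have hb := hB.b0
  have ha := hB.b0.trans hB.ba
  have hβ := bet_pos hB hR
  obtain ⟨h1, h2, -⟩ := Psi0_bound hγ hm hR hr
  refine h2.trans_le (FF_nonpos (by positivity) (k_lt hB hR) ?_)
  have h3 := hP.trans (Plow_le hγ hb hr)
  rw [← bet_sq hB hR] at h3
  have := mul_le_mul_of_nonneg_left h3 (sq_nonneg (bet (SW om1 γ 1) w))
  calc _ = bet (SW om1 γ 1) w ^ 2 * (SW om2 γ 1 * (SW om2 γ 1 * bet (SW om1 γ 1) w ^ 2)) := by ring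
    _ ≤ _ := this

lemma Psi0_zero (hγ : GammaDecay γ) (hm : Mixed γ) (hR : Root (SW om0 γ 1) (SW om1 γ 1) (SW om2 γ 1) w) :
    Psi0 γ 0 = 0 := by
  have hB := mixed_basic hγ hm
  have hb := hB.b0
  have ha := hB.b0.trans hB.ba
  rw [Psi0_eq' hγ hm hR (by simp), PsiE]
  have h := Th_zero hB hR
  simp only [MA, MB, MC]
  have hl : Real.log ((1 - (0:ℝ) ^ 2) * SW om2 γ 1 ^ 2 / (SW om1 γ 1 ^ 2 - (0 * SW om1 γ 0) ^ 2)) = 2 * Real.log (SW om2 γ 1 / SW om1 γ 1) := by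
    rw [show (1 - (0:ℝ) ^ 2) * SW om2 γ 1 ^ 2 / (SW om1 γ 1 ^ 2 - (0 * SW om1 γ 0) ^ 2) = (SW om2 γ 1 / SW om1 γ 1) ^ 2 by
      field_simp; simp, Real.log_pow]; push_cast; ring
  rw [hl]
  norm_num
  linarith

lemma SW_tend {ω : ℕ → ℝ} (hω : Wt ω) (hγ : GammaDecay γ) {e : ℝ} (he : |e| ≤ 1) :
    Tendsto (SW ω γ) (nhdsWithin e (Ioo (-1) 1)) (nhds (SW ω γ e)) :=
  ((SW_cont hω hγ) e (abs_le.mp he)).mono Ioo_subset_Icc_self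

lemma SW_tend_abs {ω : ℕ → ℝ} (hω : Wt ω) (hγ : GammaDecay γ) {e : ℝ} (he : |e| = 1) :
    Tendsto (fun r => SW ω γ |r|) (nhdsWithin e (Ioo (-1) 1)) (nhds (SW ω γ 1)) := by
  have h1 : Tendsto (fun r : ℝ => |r|) (nhdsWithin e (Ioo (-1) 1)) (nhdsWithin 1 (Icc (-1) 1)) := by
    apply tendsto_nhdsWithin_of_tendsto_nhds_of_eventually_within
    · rw [← he]; exact (continuous_abs.tendsto e).mono_left nhdsWithin_le_nhds
    · filter_upwards [self_mem_nhdsWithin] with r hr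
      exact ⟨by linarith [abs_nonneg r], (abs_lt.mpr hr).le⟩
  have := ((SW_cont hω hγ) 1 (by simp))
  exact Tendsto.comp this h1

lemma Plow_tend (hγ : GammaDecay γ) (hb : 0 < SW om1 γ 1) {e : ℝ} (he : |e| = 1) :
    Tendsto (fun r => Plow γ |r|) (nhdsWithin e (Ioo (-1) 1)) (nhds (SW om2 γ 1)) := by
  have h0 : Tendsto (fun r : ℝ => |r|) (nhdsWithin e (Ioo (-1) 1)) (nhds 1) := by
    rw [← he]; exact (continuous_abs.tendsto e).mono_left nhdsWithin_le_nhds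
  have h := ((SW_tend_abs wt2 hγ he).mul ((h0.mul (SW_tend_abs wt1 hγ he)).const_add (SW om1 γ 1))).div
    ((h0.const_add 1).mul_const (SW om1 γ 1)) (by positivity)
  have e2 : SW om2 γ 1 * (SW om1 γ 1 + 1 * SW om1 γ 1) / ((1 + 1) * SW om1 γ 1) = SW om2 γ 1 := by
    field_simp
  rw [e2] at h
  exact h

lemma PP_up (hγ : GammaDecay γ) (hb : 0 < SW om1 γ 1) {e : ℝ} (he : |e| = 1) (heb : |SW om1 γ e| = SW om1 γ 1)
    (hr : |r| < 1) (her : |e - r| = 1 - |r|) :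
    PP (SW om1 γ 1) (SW om1 γ r) r ≤ 2 * SW om2 γ 1 / (1 + |r|) := by
  have hy : (1 - r ^ 2) = (1 - |r|) * (1 + |r|) := by rw [← sq_abs]; ring
  have h5 : 0 < 1 - |r| := by linarith
  have h1 := D1_lip hγ he.le hr.le
  rw [her] at h1
  have h0 := abs_nonneg r
  have h2 : |e * SW om1 γ e| = SW om1 γ 1 := by rw [abs_mul, he, heb, one_mul]
  have h3 : |r * SW om1 γ r| ≤ SW om1 γ 1 := by
    rw [abs_mul]
    have := SW_mono wt1 hγ hr.le
    nlinarith [abs_nonneg (SW om1 γ r)]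
  have h4 : SW om1 γ 1 ^ 2 - (r * SW om1 γ r) ^ 2 ≤ SW om2 γ 1 * (1 - |r|) * (2 * SW om1 γ 1) := by
    rw [← h2, sq_abs, h2]
    have h6 : |e * SW om1 γ e + r * SW om1 γ r| ≤ 2 * SW om1 γ 1 := by
      refine (abs_add_le _ _).trans ?_
      linarith
    calc _ = (e * SW om1 γ e - r * SW om1 γ r) * (e * SW om1 γ e + r * SW om1 γ r) := by ring
      _ ≤ |(e * SW om1 γ e - r * SW om1 γ r) * (e * SW om1 γ e + r * SW om1 γ r)| := le_abs_self _
      _ = |e * SW om1 γ e - r * SW om1 γ r| * |e * SW om1 γ e + r * SW om1 γ r| := abs_mul _ _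
      _ ≤ _ := by
        apply mul_le_mul h1 h6 (abs_nonneg _) ((abs_nonneg _).trans h1)
  rw [PP, hy, div_le_div_iff₀ (by positivity) (by positivity)]
  have := mul_le_mul_of_nonneg_right h4 (show 0 ≤ 1 + |r| by positivity)
  linarith

lemma ev_dist {e : ℝ} (he : e = 1 ∨ e = -1) :
    ∀ᶠ r in nhdsWithin e (Ioo (-1) 1), |r| < 1 ∧ |e - r| = 1 - |r| := by
  rcases he with rfl | rfl
  · have : ∀ᶠ r : ℝ in nhdsWithin 1 (Ioo (-1) 1), 0 < r := nhdsWithin_le_nhds (lt_mem_nhds one_pos)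
    filter_upwards [this, self_mem_nhdsWithin] with r h1 h2
    refine ⟨abs_lt.mpr h2, ?_⟩
    rw [abs_of_pos h1, abs_of_nonneg (by linarith [h2.2])]
  · have : ∀ᶠ r : ℝ in nhdsWithin (-1) (Ioo (-1) 1), r < 0 := nhdsWithin_le_nhds (gt_mem_nhds (by norm_num))
    filter_upwards [this, self_mem_nhdsWithin] with r h1 h2
    refine ⟨abs_lt.mpr h2, ?_⟩
    rw [abs_of_neg h1, abs_of_nonpos (by linarith [h2.1])]; ring

lemma limsup_neg (hγ : GammaDecay γ) (hm : Mixed γ) (hR : Root (SW om0 γ 1) (SW om1 γ 1) (SW om2 γ 1) w)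
    {e : ℝ} (he : e = 1 ∨ e = -1) :
    Filter.limsup (fun r : ℝ => (Psi0 γ r : EReal)) (nhdsWithin e (Set.Ioo (-1 : ℝ) 1))
      < ((Psi0 γ 0 : ℝ) : EReal) := by
  have hB := mixed_basic hγ hm
  have hb := hB.b0
  have ha := hB.b0.trans hB.ba
  have hβ := bet_pos hB hR
  have habs : |e| = 1 := by rcases he with rfl | rfl <;> simp
  suffices h : ∃ c : ℝ, c < 0 ∧ ∀ᶠ r in nhdsWithin e (Set.Ioo (-1 : ℝ) 1), Psi0 γ r ≤ c by
    obtain ⟨c, hc, h⟩ := h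
    rw [Psi0_zero hγ hm hR]
    refine lt_of_le_of_lt (Filter.limsup_le_of_le (a := (c : EReal)) (by isBoundedDefault) ?_)
      (EReal.coe_lt_coe_iff.mpr hc)
    filter_upwards [h] with r hr
    exact EReal.coe_le_coe_iff.mpr hr
  have hr2 : Tendsto (fun r : ℝ => r) (nhdsWithin e (Ioo (-1) 1)) (nhds e) := nhdsWithin_le_nhds
  have hra : Tendsto (fun r : ℝ => |r|) (nhdsWithin e (Ioo (-1) 1)) (nhds 1) := by
    rw [← habs]; exact (continuous_abs.tendsto e).mono_left nhdsWithin_le_nhds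
  have hle := SW_mono wt1 hγ habs.le
  rcases eq_or_lt_of_le hle with heq | hlt
  · have hup : Tendsto (fun r : ℝ => 2 * SW om2 γ 1 / (1 + |r|)) (nhdsWithin e (Ioo (-1) 1)) (nhds (SW om2 γ 1)) := by
      have := (tendsto_const_nhds (x := 2 * SW om2 γ 1)).div (hra.const_add 1) (by norm_num)
      rwa [show 2 * SW om2 γ 1 / (1 + 1) = SW om2 γ 1 by ring] at this
    have hPt : Tendsto (fun r => PP (SW om1 γ 1) (SW om1 γ r) r) (nhdsWithin e (Ioo (-1) 1)) (nhds (SW om2 γ 1)) := by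
      refine tendsto_of_tendsto_of_tendsto_of_le_of_le' (Plow_tend hγ hb habs) hup ?_ ?_
      · filter_upwards [ev_dist he] with r hr using Plow_le hγ hb hr.1
      · filter_upwards [ev_dist he] with r hr using PP_up hγ hb habs heq hr.1 hr.2
    set k := SW om2 γ 1 * bet (SW om1 γ 1) w ^ 2 with hk
    have hk0 : 0 < k := by positivity
    have hkk := FF_kk hk0 (k_lt hB hR)
    have hπ : Tendsto (fun r => bet (SW om1 γ 1) w ^ 2 * PP (SW om1 γ 1) (SW om1 γ r) r) (nhdsWithin e (Ioo (-1) 1)) (nhds k) := by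
      have := hPt.const_mul (bet (SW om1 γ 1) w ^ 2)
      rwa [mul_comm (bet (SW om1 γ 1) w ^ 2) (SW om2 γ 1)] at this
    have hFc : ContinuousAt (FF k) k := by
      have h1 : k + k ≠ 0 := by positivity
      have h2 := hk0.ne'
      unfold FF
      fun_prop (disch := assumption)
    have hF := hFc.tendsto.comp hπ
    refine ⟨FF k k / 2, by linarith, ?_⟩
    filter_upwards [hF.eventually (gt_mem_nhds (show FF k k < FF k k / 2 by linarith)), ev_dist he] with r h1 h2
    exact ((Psi0_bound hγ hm hR h2.1).2.1.trans h1).le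
  · have hden : Tendsto (fun r : ℝ => (1 - r ^ 2) * SW om1 γ 1) (nhdsWithin e (Ioo (-1) 1)) (nhdsWithin 0 (Ioi 0)) := by
      apply tendsto_nhdsWithin_of_tendsto_nhds_of_eventually_within
      · have := ((hr2.pow 2).const_sub 1).mul_const (SW om1 γ 1)
        rwa [← sq_abs, habs, one_pow, sub_self, zero_mul] at this
      · filter_upwards [ev_dist he] with r hr
        have := (sq_lt_one_iff_abs_lt_one r).mpr hr.1
        exact mul_pos (by linarith) hb
    have hnum : Tendsto (fun r : ℝ => SW om1 γ 1 ^ 2 - (r * SW om1 γ r) ^ 2) (nhdsWithin e (Ioo (-1) 1))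
        (nhds (SW om1 γ 1 ^ 2 - (e * SW om1 γ e) ^ 2)) :=
      ((hr2.mul (SW_tend wt1 hγ habs.le)).pow 2).const_sub _
    have hpos : 0 < SW om1 γ 1 ^ 2 - (e * SW om1 γ e) ^ 2 := by
      rw [← sq_abs (e * SW om1 γ e), abs_mul, habs, one_mul]
      nlinarith [abs_nonneg (SW om1 γ e)]
    have hPt : Tendsto (fun r => PP (SW om1 γ 1) (SW om1 γ r) r) (nhdsWithin e (Ioo (-1) 1)) atTop := by
      have := hnum.pos_mul_atTop hpos (tendsto_inv_nhdsGT_zero.comp hden)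
      exact this
    have hlog := Real.tendsto_log_atTop.comp (hPt.const_mul_atTop (show 0 < bet (SW om1 γ 1) w ^ 2 by positivity))
    refine ⟨-1, by norm_num, ?_⟩
    filter_upwards [hlog.eventually_ge_atTop (3 + SW om2 γ 1 * bet (SW om1 γ 1) w ^ 2), ev_dist he] with r h1 h2
    have := (Psi0_bound hγ hm hR h2.1).2.2
    simp only [Function.comp] at h1
    linarith

end

/-- log(1-t)/t -/
def lg (t : ℝ) : ℝ := dslope (fun t => Real.log (1 - t)) 0 t

lemma lg_eq (t : ℝ) : Real.log (1 - t) = t * lg t := by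
  have := sub_smul_dslope (fun t => Real.log (1 - t)) 0 t
  simp at this
  rw [lg]; exact this.symm

lemma lg_analytic {t : ℝ} (ht : t < 1) : AnalyticAt ℝ lg t := by
  have h1 : ∀ t : ℝ, t < 1 → AnalyticAt ℝ (fun t => Real.log (1 - t)) t := fun t ht =>
    (analyticAt_const.sub analyticAt_id).log (by simp; linarith)
  rcases eq_or_ne t 0 with rfl | h0
  · obtain ⟨p, hp⟩ := h1 0 one_pos
    exact ⟨_, hp.has_fpower_series_dslope_fslope⟩
  · have h2 : AnalyticAt ℝ (fun t => Real.log (1 - t) / t) t := (h1 t ht).div analyticAt_id h0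
    refine h2.congr ?_
    filter_upwards [isOpen_ne.mem_nhds h0] with s hs
    rw [lg_eq]
    exact mul_div_cancel_left₀ _ hs

def NA (b s0 s1 s2 r : ℝ) : ℝ := s0 - (1 - r ^ 2) * s1 ^ 2 / bdE 1 b s1 s2 r
def NB (b s1 s2 r : ℝ) : ℝ := s1 - (1 - r ^ 2) * (s1 * (s1 + s2)) / bdE 1 b s1 s2 r
def NC (b s1 s2 r : ℝ) : ℝ := s1 + s2 - (1 - r ^ 2) * (s1 + s2) ^ 2 / bdE 1 b s1 s2 r

def HN (v b a s0 s1 s2 r u x : ℝ) : ℝ :=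
  ((a + b) * u ^ 2 - 2 * b * u * x + v * x ^ 2) *
    (v * NC b s1 s2 r + (a + b) * NA b s0 s1 s2 r - 2 * b * NB b s1 s2 r
      + r ^ 2 * (NA b s0 s1 s2 r * NC b s1 s2 r - NB b s1 s2 r ^ 2))
  - (NC b s1 s2 r * u ^ 2 - 2 * NB b s1 s2 r * u * x + NA b s0 s1 s2 r * x ^ 2) * (v * (a + b) - b ^ 2)

def HD (v b a s0 s1 s2 r : ℝ) : ℝ :=
  (v + r ^ 2 * NA b s0 s1 s2 r) * (a + b + r ^ 2 * NC b s1 s2 r) - (b + r ^ 2 * NB b s1 s2 r) ^ 2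

def HH (v b a s0 s1 s2 r u x : ℝ) : ℝ :=
  1 / 2 * (lg (r ^ 2) - (s1 / b) ^ 2 * lg (r ^ 2 * (s1 / b) ^ 2))
  + HN v b a s0 s1 s2 r u x / ((v * (a + b) - b ^ 2) * HD v b a s0 s1 s2 r)

section
variable {v b a s0 s1 s2 r : ℝ}

lemma MA_N : MA 1 v b s0 s1 s2 r = v + r ^ 2 * NA b s0 s1 s2 r := by
  rw [MA, NA]; ring
lemma MB_N : MB 1 b s1 s2 r = b + r ^ 2 * NB b s1 s2 r := by
  rw [MB, NB]; ring
lemma MC_N : MC 1 b a s1 s2 r = a + b + r ^ 2 * NC b s1 s2 r := by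
  rw [MC, NC]; ring

lemma PsiE_HH {w : ℝ} (hB : Basic v b a) (hR : Root v b a w) (hK : KPos v b a s0 s1 s2 r) (hr : |r| < 1)
    (hs : |s1| ≤ b) :
    PsiE v b a s0 s1 s2 r (EE v b w) (XX b a w) = r ^ 2 * HH v b a s0 s1 s2 r (EE v b w) (XX b a w) := by
  have hb := hB.b0
  have ha : 0 < a := hB.b0.trans hB.ba
  have hd := hB.det
  have hr2 : r ^ 2 < 1 := (sq_lt_one_iff_abs_lt_one r).mpr hr
  have hf : (s1 / b) ^ 2 ≤ 1 := by
    rw [sq_le_one_iff_abs_le_one, abs_div, abs_of_pos hb]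
    rwa [div_le_one hb]
  have hrf : r ^ 2 * (s1 / b) ^ 2 < 1 := by nlinarith [sq_nonneg r]
  have hD := hK.det hr (e := 1) (Or.inl rfl)
  have hDe : MA 1 v b s0 s1 s2 r * MC 1 b a s1 s2 r - MB 1 b s1 s2 r ^ 2 = HD v b a s0 s1 s2 r := by
    rw [MA_N, MB_N, MC_N, HD]
  rw [hDe] at hD
  have h0 := Th_zero hB hR
  have hl : Real.log ((1 - r ^ 2) * a ^ 2 / (b ^ 2 - (r * s1) ^ 2)) =
      2 * Real.log (a / b) + r ^ 2 * lg (r ^ 2) - r ^ 2 * (s1 / b) ^ 2 * lg (r ^ 2 * (s1 / b) ^ 2) := by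
    rw [← lg_eq, ← lg_eq]
    have h1 : 1 - r ^ 2 ≠ 0 := by linarith
    have h2 : 1 - r ^ 2 * (s1 / b) ^ 2 ≠ 0 := by linarith
    have h3 : (a / b) ^ 2 ≠ 0 := by positivity
    rw [show (2:ℝ) * Real.log (a / b) = Real.log ((a / b) ^ 2) by rw [Real.log_pow]; push_cast; ring]
    rw [← Real.log_mul h3 h1, ← Real.log_div (mul_ne_zero h3 h1) h2]
    congr 1
    have h4 : b ^ 2 - (r * s1) ^ 2 = b ^ 2 * (1 - r ^ 2 * (s1 / b) ^ 2) := by field_simp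
    rw [h4]
    generalize (1 - r ^ 2 * (s1 / b) ^ 2) = Q at *
    field_simp
  rw [PsiE, hDe, hl, HH]
  have hq : ((a + b) * EE v b w ^ 2 - 2 * b * EE v b w * XX b a w + v * XX b a w ^ 2) / (v * (a + b) - b ^ 2)
     - (MC 1 b a s1 s2 r * EE v b w ^ 2 - 2 * MB 1 b s1 s2 r * EE v b w * XX b a w + MA 1 v b s0 s1 s2 r * XX b a w ^ 2) / HD v b a s0 s1 s2 r
     = r ^ 2 * (HN v b a s0 s1 s2 r (EE v b w) (XX b a w) / ((v * (a + b) - b ^ 2) * HD v b a s0 s1 s2 r)) := by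
    rw [div_sub_div _ _ hd.ne' hD.ne', ← mul_div_assoc]
    congr 1
    rw [MA_N, MB_N, MC_N, HN, HD]
    ring
  linarith

lemma HH_analytic {E : Type} [NormedAddCommGroup E] [NormedSpace ℝ E] {v b a s0 s1 s2 r u x : E → ℝ} {z : E}
    (hv : AnalyticAt ℝ v z) (hb : AnalyticAt ℝ b z) (ha : AnalyticAt ℝ a z) (hs0 : AnalyticAt ℝ s0 z)
    (hs1 : AnalyticAt ℝ s1 z) (hs2 : AnalyticAt ℝ s2 z) (hr : AnalyticAt ℝ r z)
    (hu : AnalyticAt ℝ u z) (hx : AnalyticAt ℝ x z)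
    (hr1 : r z ^ 2 < 1) (hrs : r z ^ 2 * (s1 z / b z) ^ 2 < 1) (hb0 : b z ≠ 0)
    (hbd : bdE 1 (b z) (s1 z) (s2 z) (r z) ≠ 0)
    (hd : v z * (a z + b z) - b z ^ 2 ≠ 0) (hD : HD (v z) (b z) (a z) (s0 z) (s1 z) (s2 z) (r z) ≠ 0) :
    AnalyticAt ℝ (fun z => HH (v z) (b z) (a z) (s0 z) (s1 z) (s2 z) (r z) (u z) (x z)) z := by
  have k1 : AnalyticAt ℝ (fun z => bdE 1 (b z) (s1 z) (s2 z) (r z)) z := by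
    unfold bdE; fun_prop
  have k2 : AnalyticAt ℝ (fun z => NA (b z) (s0 z) (s1 z) (s2 z) (r z)) z := by
    unfold NA; exact hs0.sub (((analyticAt_const.sub (hr.pow 2)).mul (hs1.pow 2)).div k1 hbd)
  have k3 : AnalyticAt ℝ (fun z => NB (b z) (s1 z) (s2 z) (r z)) z := by
    unfold NB; exact hs1.sub (((analyticAt_const.sub (hr.pow 2)).mul (hs1.mul (hs1.add hs2))).div k1 hbd)
  have k4 : AnalyticAt ℝ (fun z => NC (b z) (s1 z) (s2 z) (r z)) z := by
    unfold NC; exact (hs1.add hs2).sub (((analyticAt_const.sub (hr.pow 2)).mul ((hs1.add hs2).pow 2)).div k1 hbd)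
  have k5 : AnalyticAt ℝ (fun z => HN (v z) (b z) (a z) (s0 z) (s1 z) (s2 z) (r z) (u z) (x z)) z := by
    unfold HN; fun_prop
  have k6 : AnalyticAt ℝ (fun z => HD (v z) (b z) (a z) (s0 z) (s1 z) (s2 z) (r z)) z := by
    unfold HD; fun_prop
  have k7 : AnalyticAt ℝ (fun z => lg (r z ^ 2)) z :=
    AnalyticAt.fun_comp (g := lg) (f := fun z => r z ^ 2) (lg_analytic hr1) (hr.pow 2)
  have k8 : AnalyticAt ℝ (fun z => (s1 z / b z) ^ 2) z := (hs1.div hb hb0).pow 2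
  have k9 : AnalyticAt ℝ (fun z => lg (r z ^ 2 * (s1 z / b z) ^ 2)) z :=
    AnalyticAt.fun_comp (g := lg) (f := fun z => r z ^ 2 * (s1 z / b z) ^ 2) (lg_analytic hrs) ((hr.pow 2).mul k8)
  have k10 : AnalyticAt ℝ (fun z => (v z * (a z + b z) - b z ^ 2)) z := by fun_prop
  unfold HH
  exact (analyticAt_const.mul (k7.sub (k8.mul k9))).add (k5.div (k10.mul k6) (mul_ne_zero hd hD))

end

section

def RR (γ : ℕ → ℝ) (w : ℝ) : Prop := Root (SW om0 γ 1) (SW om1 γ 1) (SW om2 γ 1) w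
def wR (γ : ℕ → ℝ) : ℝ := Classical.epsilon (RR γ)

def gG (v b a : ℝ) : ℝ := Real.log (a / b) - (a + b) * (a * v + b ^ 2 - b * v) / (a * b ^ 2)

lemma Gfun_eq (γ : ℕ → ℝ) : Gfun γ = gG (SW om0 γ 1) (SW om1 γ 1) (SW om2 γ 1) := by
  simp only [Gfun, gG, nuF_eq, nuD1_eq, nuD2_eq, one_pow, one_mul]

lemma rR {γ : ℕ → ℝ} (hγ : GammaDecay γ) (hm : Mixed γ) (hp : PureLike γ) :
    Root (SW om0 γ 1) (SW om1 γ 1) (SW om2 γ 1) (wR γ) := by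
  have : ∃ w, RR γ w := exists_root (mixed_basic hγ hm) (by
    have := hp
    rw [PureLike, Gfun_eq] at this
    exact this)
  exact Classical.epsilon_spec this

def HR (γ : ℕ → ℝ) (r : ℝ) : ℝ :=
  HH (SW om0 γ 1) (SW om1 γ 1) (SW om2 γ 1) (SW om0 γ r) (SW om1 γ r) (SW om2 γ r) r
      (EE (SW om0 γ 1) (SW om1 γ 1) (wR γ)) (XX (SW om1 γ 1) (SW om2 γ 1) (wR γ))

lemma Psi0_HR {γ : ℕ → ℝ} (hγ : GammaDecay γ) (hm : Mixed γ) (hp : PureLike γ) {r : ℝ} (hr : |r| < 1) :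
    Psi0 γ r = r ^ 2 * HR γ r := by
  rw [Psi0_eq' hγ hm (rR hγ hm hp) hr, HR]
  exact PsiE_HH (mixed_basic hγ hm) (rR hγ hm hp) (kpos hγ hm hr) hr (SW_mono wt1 hγ hr.le)

lemma side {γ : ℕ → ℝ} (hγ : GammaDecay γ) (hm : Mixed γ) {r : ℝ} (hr : |r| < 1) :
    r ^ 2 < 1 ∧ r ^ 2 * (SW om1 γ r / SW om1 γ 1) ^ 2 < 1 ∧ SW om1 γ 1 ≠ 0 ∧
    bdE 1 (SW om1 γ 1) (SW om1 γ r) (SW om2 γ r) r ≠ 0 ∧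
    SW om0 γ 1 * (SW om2 γ 1 + SW om1 γ 1) - SW om1 γ 1 ^ 2 ≠ 0 ∧
    HD (SW om0 γ 1) (SW om1 γ 1) (SW om2 γ 1) (SW om0 γ r) (SW om1 γ r) (SW om2 γ r) r ≠ 0 := by
  have hB := mixed_basic hγ hm
  have hb := hB.b0
  have hK := kpos hγ hm hr
  have hr2 : r ^ 2 < 1 := (sq_lt_one_iff_abs_lt_one r).mpr hr
  have hf : (SW om1 γ r / SW om1 γ 1) ^ 2 ≤ 1 := by
    rw [sq_le_one_iff_abs_le_one, abs_div, abs_of_pos hb, div_le_one hb]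
    exact SW_mono wt1 hγ hr.le
  have hD := hK.det hr (e := 1) (Or.inl rfl)
  rw [MA_N, MB_N, MC_N] at hD
  exact ⟨hr2, by nlinarith [sq_nonneg r], hb.ne', (hK.bd hr (Or.inl rfl)).ne', hB.det.ne', hD.ne'⟩

lemma HR_analytic {γ : ℕ → ℝ} (hγ : GammaDecay γ) (hm : Mixed γ) : AnalyticAt ℝ (HR γ) 0 := by
  obtain ⟨h1, h2, h3, h4, h5, h6⟩ := side hγ hm (r := 0) (by simp)
  unfold HR
  exact HH_analytic (E := ℝ) (v := fun _ => SW om0 γ 1) (b := fun _ => SW om1 γ 1) (a := fun _ => SW om2 γ 1)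
    (s0 := SW om0 γ) (s1 := SW om1 γ) (s2 := SW om2 γ) (r := fun r => r)
    (u := fun _ => EE (SW om0 γ 1) (SW om1 γ 1) (wR γ)) (x := fun _ => XX (SW om1 γ 1) (SW om2 γ 1) (wR γ))
    analyticAt_const analyticAt_const analyticAt_const (SW_analytic wt0 hγ) (SW_analytic wt1 hγ)
    (SW_analytic wt2 hγ) analyticAt_id analyticAt_const analyticAt_const h1 h2 h3 h4 h5 h6

lemma der2_sq {H f : ℝ → ℝ} (hH : AnalyticAt ℝ H 0) (hf : f =ᶠ[nhds 0] fun r => r ^ 2 * H r) :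
    iteratedDeriv 2 f 0 = 2 * H 0 := by
  rw [iteratedDeriv_succ, iteratedDeriv_one]
  have h1 : deriv f =ᶠ[nhds 0] fun r => 2 * r * H r + r ^ 2 * deriv H r := by
    filter_upwards [hf.eventuallyEq_nhds, hH.eventually_analyticAt] with r hr hr2
    rw [hr.deriv_eq]
    have := ((hasDerivAt_pow 2 r).mul hr2.differentiableAt.hasDerivAt)
    have h := this.deriv
    simp only [Nat.cast_ofNat, Nat.add_one_sub_one, pow_one] at h
    exact h
  rw [h1.deriv_eq]
  have hA : HasDerivAt H (deriv H 0) 0 := hH.differentiableAt.hasDerivAt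
  have hA2 : HasDerivAt (deriv H) (deriv (deriv H) 0) 0 := hH.deriv.differentiableAt.hasDerivAt
  have := ((((hasDerivAt_id (0:ℝ)).const_mul 2).mul hA).add ((hasDerivAt_pow 2 (0:ℝ)).mul hA2))
  have h := this.deriv
  refine Eq.trans ?_ (h.trans ?_)
  · rfl
  · simp

lemma der2_Psi0 {γ : ℕ → ℝ} (hγ : GammaDecay γ) (hm : Mixed γ) (hp : PureLike γ) :
    iteratedDeriv 2 (Psi0 γ) 0 = 2 * HR γ 0 := by
  apply der2_sq (HR_analytic hγ hm)
  have : ∀ᶠ r : ℝ in nhds 0, |r| < 1 := by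
    have := (continuous_abs.tendsto (0:ℝ)).eventually (gt_mem_nhds (by simp : |(0:ℝ)| < 1))
    exact this
  filter_upwards [this] with r hr using Psi0_HR hγ hm hp hr

variable {ι : Type} {l : Filter ι} {γ : ℕ → ℝ} {G : ι → ℕ → ℝ}

structure Near (l : Filter ι) (γ : ℕ → ℝ) (G : ι → ℕ → ℝ) : Prop where
  t : Tendsto (fun i => mixDist (G i) γ) l (nhds 0)
  d : ∀ᶠ i in l, GammaDecay (G i)

lemma Near.sw (hN : Near l γ G) (hγ : GammaDecay γ) {ω : ℕ → ℝ} (hω : Wt ω) {ρ : ι → ℝ} {r0 : ℝ}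
    (hρ : Tendsto ρ l (nhds r0)) (h1 : ∀ᶠ i in l, |ρ i| ≤ 1) (hr0 : |r0| ≤ 1) :
    Tendsto (fun i => SW ω (G i) (ρ i)) l (nhds (SW ω γ r0)) := by
  have hc : Tendsto (fun i => SW ω γ (ρ i)) l (nhds (SW ω γ r0)) := by
    refine Tendsto.comp (SW_cont hω hγ r0 (abs_le.mp hr0)) ?_
    exact tendsto_nhdsWithin_of_tendsto_nhds_of_eventually_within _ hρ
      (h1.mono fun i hi => abs_le.mp hi)
  have hd : Tendsto (fun i => SW ω (G i) (ρ i) - SW ω γ (ρ i)) l (nhds 0) := by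
    refine squeeze_zero_norm' ?_ hN.t
    filter_upwards [hN.d, h1] with i hi hi1
    exact SW_dist hω hγ hi hi1
  have := hd.add hc
  simpa using this

lemma Near.sw1 (hN : Near l γ G) (hγ : GammaDecay γ) {ω : ℕ → ℝ} (hω : Wt ω) :
    Tendsto (fun i => SW ω (G i) 1) l (nhds (SW ω γ 1)) :=
  hN.sw hγ hω tendsto_const_nhds (Eventually.of_forall fun _ => by simp) (by simp)

lemma Near.mixed (hN : Near l γ G) (hγ : GammaDecay γ) (hm : Mixed γ) : ∀ᶠ i in l, Mixed (G i) := by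
  obtain ⟨p, q, hp, hq, hpq, h1, h2⟩ := hm
  have hp2 : (0:ℝ) < γ p ^ 2 := by positivity
  have hq2 : (0:ℝ) < γ q ^ 2 := by positivity
  filter_upwards [hN.d, hN.t.eventually (gt_mem_nhds hp2), hN.t.eventually (gt_mem_nhds hq2)] with i hi e1 e2
  refine ⟨p, q, hp, hq, hpq, ?_, ?_⟩
  · intro h
    have := coef_dist hγ hi p hp
    rw [h, zero_pow two_ne_zero, zero_sub, abs_neg, abs_of_pos hp2] at this
    linarith
  · intro h
    have := coef_dist hγ hi q hq
    rw [h, zero_pow two_ne_zero, zero_sub, abs_neg, abs_of_pos hq2] at this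
    linarith

lemma Near.pure (hN : Near l γ G) (hγ : GammaDecay γ) (hm : Mixed γ) (hp : PureLike γ) :
    ∀ᶠ i in l, PureLike (G i) := by
  have hB := mixed_basic hγ hm
  have hb := hB.b0
  have ha := hB.b0.trans hB.ba
  have tv := hN.sw1 hγ wt0
  have tb := hN.sw1 hγ wt1
  have ta := hN.sw1 hγ wt2
  have h : Tendsto (fun i => Gfun (G i)) l (nhds (Gfun γ)) := by
    simp only [Gfun_eq]
    unfold gG
    refine Tendsto.sub ((ta.div tb hb.ne').log (by positivity)) ?_
    exact ((ta.add tb).mul (((ta.mul tv).add (tb.pow 2)).sub (tb.mul tv))).div (ta.mul (tb.pow 2)) (by positivity)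
  exact h.eventually (lt_mem_nhds hp)

lemma Near.w (hN : Near l γ G) (hγ : GammaDecay γ) (hm : Mixed γ) (hp : PureLike γ) :
    Tendsto (fun i => wR (G i)) l (nhds (wR γ)) := by
  have hB := mixed_basic hγ hm
  have hb := hB.b0
  have hR := rR hγ hm hp
  have hw1 := hR.w1 hB
  have tv := hN.sw1 hγ wt0
  have tb := hN.sw1 hγ wt1
  have tκ := tv.div tb hb.ne'
  have hs := hh_sign (div_pos hB.v0 hb) hR.w0 hw1 hR.h
  have th : ∀ s, Tendsto (fun i => hh (SW om0 (G i) 1 / SW om1 (G i) 1) s) l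
      (nhds (hh (SW om0 γ 1 / SW om1 γ 1) s)) := by
    intro s
    unfold hh
    exact ((tκ.mul_const _).div_const _).const_sub _
  have hroot : ∀ᶠ i in l, Basic (SW om0 (G i) 1) (SW om1 (G i) 1) (SW om2 (G i) 1) ∧
      Root (SW om0 (G i) 1) (SW om1 (G i) 1) (SW om2 (G i) 1) (wR (G i)) := by
    filter_upwards [hN.d, hN.mixed hγ hm, hN.pure hγ hm hp] with i h1 h2 h3
    exact ⟨mixed_basic h1 h2, rR h1 h2 h3⟩
  rw [tendsto_order]
  constructor
  · intro s hsw
    have h0 : max s (wR γ / 2) < wR γ := max_lt hsw (by linarith [hR.w0])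
    have h00 : 0 < max s (wR γ / 2) := lt_max_of_lt_right (by linarith [hR.w0])
    filter_upwards [hroot, (th _).eventually (gt_mem_nhds (hs.1 _ h00 h0))] with i ⟨hB', hR'⟩ hi
    refine lt_of_le_of_lt (le_max_left s (wR γ / 2)) ?_
    by_contra hcon
    push Not at hcon
    rcases hcon.lt_or_eq with h | h
    · have := (hh_sign (div_pos hB'.v0 hB'.b0) hR'.w0 (hR'.w1 hB') hR'.h).2 _ h (h0.trans hw1)
      linarith
    · rw [← h, hR'.h] at hi
      exact lt_irrefl _ hi
  · intro s hsw
    have h0 : wR γ < min s ((wR γ + 1) / 2) := lt_min hsw (by linarith)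
    have h00 : min s ((wR γ + 1) / 2) < 1 := min_lt_of_right_lt (by linarith)
    filter_upwards [hroot, (th _).eventually (lt_mem_nhds (hs.2 _ h0 h00))] with i ⟨hB', hR'⟩ hi
    refine lt_of_lt_of_le ?_ (min_le_left s ((wR γ + 1) / 2))
    by_contra hcon
    push Not at hcon
    rcases hcon.lt_or_eq with h | h
    · have := (hh_sign (div_pos hB'.v0 hB'.b0) hR'.w0 (hR'.w1 hB') hR'.h).1 _ (hR.w0.trans h0) h
      linarith
    · rw [h, hR'.h] at hi
      exact lt_irrefl _ hi

lemma HH_tend {f0 f1 f2 f3 f4 f5 f6 f7 f8 : ι → ℝ} {v b a s0 s1 s2 r u x : ℝ}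
    (h0 : Tendsto f0 l (nhds v)) (h1 : Tendsto f1 l (nhds b)) (h2 : Tendsto f2 l (nhds a))
    (h3 : Tendsto f3 l (nhds s0)) (h4 : Tendsto f4 l (nhds s1)) (h5 : Tendsto f5 l (nhds s2))
    (h6 : Tendsto f6 l (nhds r)) (h7 : Tendsto f7 l (nhds u)) (h8 : Tendsto f8 l (nhds x))
    (hr1 : r ^ 2 < 1) (hrs : r ^ 2 * (s1 / b) ^ 2 < 1) (hb0 : b ≠ 0) (hbd : bdE 1 b s1 s2 r ≠ 0)
    (hd : v * (a + b) - b ^ 2 ≠ 0) (hD : HD v b a s0 s1 s2 r ≠ 0) :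
    Tendsto (fun i => HH (f0 i) (f1 i) (f2 i) (f3 i) (f4 i) (f5 i) (f6 i) (f7 i) (f8 i)) l
      (nhds (HH v b a s0 s1 s2 r u x)) := by
  have hp (z : Fin 9 → ℝ) (j : Fin 9) : AnalyticAt ℝ (fun y : Fin 9 → ℝ => y j) z :=
    (ContinuousLinearMap.proj (R := ℝ) (φ := fun _ : Fin 9 => ℝ) j).analyticAt z
  have hA := fun z : Fin 9 → ℝ => HH_analytic (E := Fin 9 → ℝ) (z := z) (hp z 0) (hp z 1) (hp z 2) (hp z 3) (hp z 4)
    (hp z 5) (hp z 6) (hp z 7) (hp z 8)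
  obtain ⟨z, z0, z1, z2, z3, z4, z5, z6, z7, z8⟩ : ∃ z : Fin 9 → ℝ, z 0 = v ∧ z 1 = b ∧ z 2 = a ∧ z 3 = s0 ∧
      z 4 = s1 ∧ z 5 = s2 ∧ z 6 = r ∧ z 7 = u ∧ z 8 = x :=
    ⟨![v, b, a, s0, s1, s2, r, u, x], rfl, rfl, rfl, rfl, rfl, rfl, rfl, rfl, rfl⟩
  obtain ⟨g, g0, g1, g2, g3, g4, g5, g6, g7, g8⟩ : ∃ g : ι → Fin 9 → ℝ, (∀ i, g i 0 = f0 i) ∧ (∀ i, g i 1 = f1 i) ∧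
      (∀ i, g i 2 = f2 i) ∧ (∀ i, g i 3 = f3 i) ∧ (∀ i, g i 4 = f4 i) ∧ (∀ i, g i 5 = f5 i) ∧
      (∀ i, g i 6 = f6 i) ∧ (∀ i, g i 7 = f7 i) ∧ (∀ i, g i 8 = f8 i) :=
    ⟨fun i => ![f0 i, f1 i, f2 i, f3 i, f4 i, f5 i, f6 i, f7 i, f8 i], fun _ => rfl, fun _ => rfl, fun _ => rfl,
      fun _ => rfl, fun _ => rfl, fun _ => rfl, fun _ => rfl, fun _ => rfl, fun _ => rfl⟩
  have hA := hA z
  rw [z0, z1, z2, z3, z4, z5, z6] at hA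
  have hC := (hA hr1 hrs hb0 hbd hd hD).continuousAt.tendsto
  rw [z0, z1, z2, z3, z4, z5, z6, z7, z8] at hC
  have hT : Tendsto g l (nhds z) := by
    rw [tendsto_pi_nhds]
    have all : ∀ j : Fin 9, j = 0 ∨ j = 1 ∨ j = 2 ∨ j = 3 ∨ j = 4 ∨ j = 5 ∨ j = 6 ∨ j = 7 ∨ j = 8 := by decide
    intro j
    rcases all j with rfl | rfl | rfl | rfl | rfl | rfl | rfl | rfl | rfl
    · simpa only [g0, z0] using h0
    · simpa only [g1, z1] using h1
    · simpa only [g2, z2] using h2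
    · simpa only [g3, z3] using h3
    · simpa only [g4, z4] using h4
    · simpa only [g5, z5] using h5
    · simpa only [g6, z6] using h6
    · simpa only [g7, z7] using h7
    · simpa only [g8, z8] using h8
  have hF := hC.comp hT
  simp only [Function.comp_def, g0, g1, g2, g3, g4, g5, g6, g7, g8] at hF
  exact hF

lemma Near.hR (hN : Near l γ G) (hγ : GammaDecay γ) (hm : Mixed γ) (hp : PureLike γ) {ρ : ι → ℝ} {r0 : ℝ}
    (hρ : Tendsto ρ l (nhds r0)) (h1 : ∀ᶠ i in l, |ρ i| ≤ 1) (hr0 : |r0| < 1) :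
    Tendsto (fun i => HR (G i) (ρ i)) l (nhds (HR γ r0)) := by
  have hB := mixed_basic hγ hm
  have hb := hB.b0
  have hR := rR hγ hm hp
  have hβ := bet_pos hB hR
  have tv := hN.sw1 hγ wt0
  have tb := hN.sw1 hγ wt1
  have ta := hN.sw1 hγ wt2
  have tw := hN.w hγ hm hp
  have tβ : Tendsto (fun i => bet (SW om1 (G i) 1) (wR (G i))) l (nhds (bet (SW om1 γ 1) (wR γ))) :=
    (tw.div tb hb.ne').sqrt
  have tE : Tendsto (fun i => EE (SW om0 (G i) 1) (SW om1 (G i) 1) (wR (G i))) l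
      (nhds (EE (SW om0 γ 1) (SW om1 γ 1) (wR γ))) := by
    unfold EE alp
    exact (((tendsto_const_nhds.div (tβ.mul tb) (by positivity)).sub tβ).mul tv).add (tβ.mul tb)
  have tX : Tendsto (fun i => XX (SW om1 (G i) 1) (SW om2 (G i) 1) (wR (G i))) l
      (nhds (XX (SW om1 γ 1) (SW om2 γ 1) (wR γ))) := by
    unfold XX
    exact (ta.mul tβ).add (tendsto_const_nhds.div tβ hβ.ne')
  obtain ⟨k1, k2, k3, k4, k5, k6⟩ := side hγ hm hr0
  exact HH_tend tv tb ta (hN.sw hγ wt0 hρ h1 hr0.le) (hN.sw hγ wt1 hρ h1 hr0.le) (hN.sw hγ wt2 hρ h1 hr0.le)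
    hρ tE tX k1 k2 k3 k4 k5 k6

lemma Near.bdry (hN : Near l γ G) (hγ : GammaDecay γ) (hm : Mixed γ) (hp : PureLike γ) {ρ : ι → ℝ} {r0 : ℝ}
    (hρ : Tendsto ρ l (nhds r0)) (h1 : ∀ᶠ i in l, |ρ i| ≤ 1) (hr0 : |r0| = 1) :
    ∀ᶠ i in l, |ρ i| < 1 → Psi0 (G i) (ρ i) < 0 := by
  have hB := mixed_basic hγ hm
  have hb := hB.b0
  have ha := hB.b0.trans hB.ba
  have hR := rR hγ hm hp
  have tb := hN.sw1 hγ wt1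
  have ta := hN.sw1 hγ wt2
  have tw := hN.w hγ hm hp
  have hρ' : Tendsto (fun i => |ρ i|) l (nhds 1) := by rw [← hr0]; exact hρ.abs
  have h1' : ∀ᶠ i in l, |(|ρ i|)| ≤ 1 := by simpa using h1
  have sb := hN.sw hγ wt1 hρ' h1' (by simp)
  have sa := hN.sw hγ wt2 hρ' h1' (by simp)
  have tP : Tendsto (fun i => Plow (G i) |ρ i|) l (nhds (SW om2 γ 1)) := by
    have h := (sa.mul (tb.add (hρ'.mul sb))).div ((hρ'.const_add 1).mul tb) (by positivity)
    have e2 : SW om2 γ 1 * (SW om1 γ 1 + 1 * SW om1 γ 1) / ((1 + 1) * SW om1 γ 1) = SW om2 γ 1 := by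
      field_simp
    rw [e2] at h
    exact h
  have tQ := ta.mul (ta.mul (tw.div tb hb.ne'))
  have hlt : SW om2 γ 1 * (SW om2 γ 1 * (wR γ / SW om1 γ 1)) < SW om2 γ 1 := by
    have := k_lt hB hR
    rw [bet_sq hB hR] at this
    nlinarith
  filter_upwards [tQ.eventually_lt tP hlt, hN.d, hN.mixed hγ hm, hN.pure hγ hm hp] with i hi d m p hr
  exact Psi0_neg_of_Plow d m (rR d m p) hr hi.le

end

lemma mixDist_nonneg (γ' γ : ℕ → ℝ) : 0 ≤ mixDist γ' γ := by
  unfold mixDist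
  refine tsum_nonneg fun p => ?_
  split_ifs <;> positivity

lemma HR_neg {γ : ℕ → ℝ} (hγ : GammaDecay γ) (hM : ConditionM γ) {r : ℝ} (hr : |r| < 1) : HR γ r < 0 := by
  obtain ⟨hm, hp, h2, hi, -⟩ := hM
  rw [der2_Psi0 hγ hm hp] at h2
  rcases eq_or_ne r 0 with rfl | h0
  · linarith
  · have := hi r (abs_lt.mp hr) h0
    rw [Psi0_zero hγ hm (rR hγ hm hp), Psi0_HR hγ hm hp hr] at this
    have : 0 < r ^ 2 := by positivity
    by_contra hc
    push Not at hc
    have := mul_nonneg this.le hc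
    linarith

lemma main_ev {γ : ℕ → ℝ} (hγ : GammaDecay γ) (hM : ConditionM γ) {L : Filter (ℕ → ℝ)}
    (hN : Near L γ id) : ∀ᶠ γ' in L, ConditionM γ' := by
  have hm := hM.1
  have hp := hM.2.1
  have key : ∀ r0 ∈ Icc (-1:ℝ) 1, {p : (ℕ → ℝ) × ℝ | |p.2| < 1 → p.2 ≠ 0 → Psi0 p.1 p.2 < 0} ∈ L ×ˢ nhds r0 := by
    intro r0 hr0
    have hr0' : |r0| ≤ 1 := abs_le.mpr hr0
    set J : Filter ((ℕ → ℝ) × ℝ) := (L ×ˢ nhds r0) ⊓ 𝓟 {p | |p.2| ≤ 1} with hJ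
    have hJ1 : Tendsto Prod.fst J L := tendsto_fst.mono_left inf_le_left
    have hJ2 : Tendsto Prod.snd J (nhds r0) := tendsto_snd.mono_left inf_le_left
    have hJ3 : ∀ᶠ p : (ℕ → ℝ) × ℝ in J, |p.2| ≤ 1 := by
      rw [hJ, eventually_inf_principal]
      exact Eventually.of_forall fun p hp => hp
    have hNJ : Near J γ (fun p : (ℕ → ℝ) × ℝ => p.1) := ⟨hN.t.comp hJ1, hJ1.eventually hN.d⟩
    have main : ∀ᶠ p : (ℕ → ℝ) × ℝ in J, |p.2| < 1 → p.2 ≠ 0 → Psi0 p.1 p.2 < 0 := by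
      rcases hr0'.lt_or_eq with h | h
      · have hT := hNJ.hR hγ hm hp hJ2 hJ3 h
        filter_upwards [hT.eventually (gt_mem_nhds (HR_neg hγ hM h)), hNJ.d, hNJ.mixed hγ hm,
          hNJ.pure hγ hm hp] with p hp1 d m q hr hne
        rw [Psi0_HR d m q hr]
        exact mul_neg_of_pos_of_neg (by positivity) hp1
      · filter_upwards [hNJ.bdry hγ hm hp hJ2 hJ3 h] with p hp hr _ using hp hr
    rw [hJ, eventually_inf_principal] at main
    filter_upwards [main] with p hp hr hne using hp hr.le hr hne
  have hcomp := isCompact_Icc.mem_prod_nhdsSet_of_forall key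
  have hall : ∀ᶠ γ' in L, ∀ r ∈ Ioo (-1:ℝ) 1, r ≠ 0 → Psi0 γ' r < 0 := by
    obtain ⟨A, hA, B, hB, hAB⟩ := Filter.mem_prod_iff.mp hcomp
    filter_upwards [hA] with γ' h r hr hne
    have hrB : r ∈ B := subset_of_mem_nhdsSet hB ⟨hr.1.le, hr.2.le⟩
    have q := hAB (Set.mk_mem_prod h hrB)
    rw [Set.mem_ofPred_eq] at q
    exact q (abs_lt.mpr hr) hne
  have h0 : Tendsto (fun γ' => HR γ' 0) L (nhds (HR γ 0)) := hN.hR hγ hm hp (ρ := fun _ => 0) (r0 := 0) tendsto_const_nhds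
    (Eventually.of_forall fun _ => by simp) (by simp)
  have hn0 : HR γ 0 < 0 := HR_neg hγ hM (by simp)
  have e2 : ∀ᶠ γ' in L, HR γ' 0 < 0 := h0.eventually (gt_mem_nhds hn0)
  have e3 : ∀ᶠ γ' in L, GammaDecay γ' := hN.d
  have e4 : ∀ᶠ γ' in L, Mixed γ' := hN.mixed hγ hm
  have e5 : ∀ᶠ γ' in L, PureLike γ' := hN.pure hγ hm hp
  filter_upwards [hall, e2, e3, e4, e5] with γ' h1 h2 d m p
  have hR := rR d m p
  refine ⟨m, p, ?_, ?_, limsup_neg d m hR (Or.inl rfl), limsup_neg d m hR (Or.inr rfl)⟩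
  · rw [der2_Psi0 d m p]
    linarith
  · intro r hr hne
    rw [Psi0_zero d m hR]
    exact h1 r hr hne

/-- Condition M is an open condition: if a non-pure mixture ν
satisfies Condition M, then so does every mixture ν̄ close enough to ν in ‖·‖. -/
theorem conditionM_open
    (γ : ℕ → ℝ) (hγ : GammaDecay γ) (hM : ConditionM γ) :
    ∃ δ > (0 : ℝ), ∀ γ' : ℕ → ℝ, GammaDecay γ' → mixDist γ' γ < δ → ConditionM γ' := by
  have hN : Near (comap (fun γ' => mixDist γ' γ) (nhds 0) ⊓ 𝓟 {γ' | GammaDecay γ'}) γ id := by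
    constructor
    · exact tendsto_comap.mono_left inf_le_left
    · rw [eventually_inf_principal]
      exact Eventually.of_forall fun p hp => hp
  have h := main_ev hγ hM hN
  rw [eventually_inf_principal, eventually_comap, Metric.eventually_nhds_iff] at h
  obtain ⟨δ, hδ, h⟩ := h
  refine ⟨δ, hδ, fun γ' d hd => h (y := mixDist γ' γ) ?_ γ' rfl d⟩
  rw [Real.dist_eq, sub_zero, abs_of_nonneg (mixDist_nonneg γ' γ)]
  exact hd

end SpinGlass
end
end

section
/- (Lipschitz continuity of the free energy in the disorder) Fix N ∈ ℕ, β > 0, p_0 ≥ 2 and nonnegative reals γ_2, …, γ_{p_0}, and set ν(x) = Σ_{p=2}^{p_0} γ_p² x^p. Then the map J ↦ F_{N,β}(J) = (1/N)·log ∫_{S^{N-1}(√N)} exp(−β·H_N(J,σ)) dσ, viewed as a function of the array J ∈ ℝ^M equipped with the Euclidean norm, is Lipschitz continuous with Lipschitz constant β·√(ν(1)/N). -/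
open MeasureTheory Real Filter Set

noncomputable section

namespace SpinGlass

/-- The uniform probability measure on the unit sphere of ℝᴺ. -/
def unifSphere (N : ℕ) : Measure (Metric.sphere (0 : EuclideanSpace ℝ (Fin N)) 1) :=
  ((volume : Measure (EuclideanSpace ℝ (Fin N))).toSphere Set.univ)⁻¹ •
    (volume : Measure (EuclideanSpace ℝ (Fin N))).toSphere

/-- Index type for the disorder array `J` of a finite mixture:
a degree `p` with `2 ≤ p ≤ p0` and a `p`-tuple of spin indices. -/
abbrev FinIdx (p0 N : ℕ) : Type :=
  (p : {x : ℕ // x ∈ Finset.Icc 2 p0}) × (Fin (p : ℕ) → Fin N)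

/-- The finite-mixture Hamiltonian `H_N(J,σ)` as a function of the disorder array
`J ∈ ℝ^M` and the spin configuration `σ`. -/
def HamFin (p0 N : ℕ) (γ : ℕ → ℝ) (J : EuclideanSpace ℝ (FinIdx p0 N))
    (σ : EuclideanSpace ℝ (Fin N)) : ℝ :=
  ∑ p : {x : ℕ // x ∈ Finset.Icc 2 p0},
    γ (p : ℕ) * (Real.sqrt ((N : ℝ) ^ ((p : ℕ) - 1)))⁻¹ *
      ∑ i : Fin (p : ℕ) → Fin N, J ⟨p, i⟩ * ∏ k, σ (i k)

/-- The free energy `F_{N,β}(J)` (in unit-sphere coordinates `σ = √N · u`). -/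
def FreeEnergyFin (p0 N : ℕ) (γ : ℕ → ℝ) (β : ℝ)
    (J : EuclideanSpace ℝ (FinIdx p0 N)) : ℝ :=
  (1 / N : ℝ) * Real.log (∫ u : Metric.sphere (0 : EuclideanSpace ℝ (Fin N)) 1,
    Real.exp (-β * HamFin p0 N γ J
      (Real.sqrt N • (u : EuclideanSpace ℝ (Fin N)))) ∂(unifSphere N))

theorem unifSphere_prob (N : ℕ) (hN : 0 < N) : IsProbabilityMeasure (unifSphere N) := by
  have : Nonempty (Fin N) := ⟨⟨0, hN⟩⟩
  constructor
  have h0 : (volume : Measure (EuclideanSpace ℝ (Fin N))).toSphere Set.univ ≠ 0 := by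
    rw [Measure.toSphere_apply_univ]
    refine mul_ne_zero ?_ (Metric.measure_ball_pos _ _ one_pos).ne'
    simp [hN.ne']
  simp only [unifSphere, Measure.smul_apply, smul_eq_mul]
  exact ENNReal.inv_mul_cancel h0 (measure_ne_top _ _)

theorem ham_diff (p0 N : ℕ) (hN : 0 < N) (γ : ℕ → ℝ) (J J' : EuclideanSpace ℝ (FinIdx p0 N))
    (σ : EuclideanSpace ℝ (Fin N)) (hσ : ∑ i, σ i ^ 2 = N) :
    |HamFin p0 N γ J σ - HamFin p0 N γ J' σ| ≤
      Real.sqrt (N * ∑ p ∈ Finset.Icc 2 p0, γ p ^ 2) * dist J J' := by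
  have hN' : (N : ℝ) ≠ 0 := by exact_mod_cast hN.ne'
  let c : FinIdx p0 N → ℝ := fun x =>
    γ (x.1 : ℕ) * (Real.sqrt ((N : ℝ) ^ ((x.1 : ℕ) - 1)))⁻¹ * ∏ k, σ (x.2 k)
  have e : HamFin p0 N γ J σ - HamFin p0 N γ J' σ = ∑ x : FinIdx p0 N, c x * (J x - J' x) := by
    rw [Fintype.sum_sigma, HamFin, HamFin, ← Finset.sum_sub_distrib]
    refine Finset.sum_congr rfl fun p _ => ?_
    rw [← mul_sub, ← Finset.sum_sub_distrib, Finset.mul_sum]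
    refine Finset.sum_congr rfl fun i _ => ?_
    simp only [c]
    ring
  have hc : ∑ x : FinIdx p0 N, c x ^ 2 = N * ∑ p ∈ Finset.Icc 2 p0, γ p ^ 2 := by
    rw [Fintype.sum_sigma, ← Finset.sum_coe_sort (Finset.Icc 2 p0) (fun p => γ p ^ 2), Finset.mul_sum]
    refine Finset.sum_congr rfl fun p _ => ?_
    have hp : 2 ≤ (p : ℕ) := (Finset.mem_Icc.1 p.2).1
    have h1 : ∑ i : Fin (p : ℕ) → Fin N, (∏ k, σ (i k)) ^ 2 = (N : ℝ) ^ (p : ℕ) := by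
      simp_rw [← Finset.prod_pow]
      rw [← hσ, Finset.sum_pow']
      simp
    simp only [c, mul_pow]
    rw [← Finset.mul_sum, h1, inv_pow, Real.sq_sqrt (by positivity)]
    obtain ⟨q, hq⟩ : ∃ q, (p : ℕ) = q + 1 := ⟨(p : ℕ) - 1, by omega⟩
    rw [hq, Nat.add_sub_cancel, pow_succ]
    field_simp
    ring
  rw [e, EuclideanSpace.dist_eq, ← hc, ← Real.sqrt_mul (Finset.sum_nonneg fun _ _ => sq_nonneg _)]
  apply Real.abs_le_sqrt
  simp only [Real.dist_eq, sq_abs]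
  exact Finset.sum_mul_sq_le_sq_mul_sq _ _ _

theorem exp_integrable (p0 N : ℕ) (hN : 0 < N) (γ : ℕ → ℝ) (β : ℝ)
    (J : EuclideanSpace ℝ (FinIdx p0 N)) :
    Integrable (fun u : Metric.sphere (0 : EuclideanSpace ℝ (Fin N)) 1 =>
      Real.exp (-β * HamFin p0 N γ J
        (Real.sqrt N • (u : EuclideanSpace ℝ (Fin N))))) (unifSphere N) := by
  have := unifSphere_prob N hN
  have hcont : Continuous (fun u : Metric.sphere (0 : EuclideanSpace ℝ (Fin N)) 1 =>
      Real.exp (-β * HamFin p0 N γ J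
        (Real.sqrt N • (u : EuclideanSpace ℝ (Fin N))))) := by
    unfold HamFin
    simp only [PiLp.smul_apply]
    fun_prop
  exact hcont.integrable_of_hasCompactSupport (HasCompactSupport.of_compactSpace _)

theorem free_le (N : ℕ) (hN : 0 < N) (β : ℝ) (hβ : 0 < β) (p0 : ℕ) (γ : ℕ → ℝ)
    (J J' : EuclideanSpace ℝ (FinIdx p0 N)) :
    FreeEnergyFin p0 N γ β J ≤ FreeEnergyFin p0 N γ β J' +
      β * Real.sqrt ((∑ p ∈ Finset.Icc 2 p0, γ p ^ 2) / N) * dist J J' := by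
  have := unifSphere_prob N hN
  have hN' : (0 : ℝ) < N := by exact_mod_cast hN
  set V := ∑ p ∈ Finset.Icc 2 p0, γ p ^ 2 with hV
  set L := β * (Real.sqrt (N * V) * dist J J') with hL
  have hpt : ∀ u : Metric.sphere (0 : EuclideanSpace ℝ (Fin N)) 1,
      Real.exp (-β * HamFin p0 N γ J (Real.sqrt N • (u : EuclideanSpace ℝ (Fin N)))) ≤
      Real.exp L *
        Real.exp (-β * HamFin p0 N γ J' (Real.sqrt N • (u : EuclideanSpace ℝ (Fin N)))) := by
    intro u
    have hs : ∑ i, (Real.sqrt N • (u : EuclideanSpace ℝ (Fin N))) i ^ 2 = N := by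
      have h1 : ‖(u : EuclideanSpace ℝ (Fin N))‖ = 1 := by simp
      rw [← EuclideanSpace.real_norm_sq_eq, norm_smul, h1]
      simp
    have h := (abs_le.1 (ham_diff p0 N hN γ J J' _ hs)).1
    rw [← Real.exp_add, Real.exp_le_exp]
    have := mul_le_mul_of_nonneg_left h hβ.le
    rw [hL]
    linarith
  have hi := integral_mono (exp_integrable p0 N hN γ β J)
    ((exp_integrable p0 N hN γ β J').const_mul _) hpt
  rw [integral_const_mul] at hi
  have hJ := integral_exp_pos (exp_integrable p0 N hN γ β J)
  have hJ' := integral_exp_pos (exp_integrable p0 N hN γ β J')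
  have hlog := Real.log_le_log hJ hi
  rw [Real.log_mul (Real.exp_pos _).ne' hJ'.ne', Real.log_exp] at hlog
  have hk : Real.sqrt (V / N) = (1 / N) * Real.sqrt (N * V) := by
    have : V / N = (1 / N) ^ 2 * (N * V) := by field_simp
    rw [this, Real.sqrt_mul (by positivity), Real.sqrt_sq (by positivity)]
  rw [hk]
  unfold FreeEnergyFin
  have := mul_le_mul_of_nonneg_left hlog (by positivity : (0 : ℝ) ≤ 1 / N)
  rw [hL] at this
  linarith

/-- (Lipschitz continuity of the free energy in the disorder.)
For a finite mixture ν(x) = Σ_{p=2}^{p0} γ_p² xᵖ, the map J ↦ F_{N,β}(J) is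
Lipschitz with constant β·√(ν(1)/N) w.r.t. the Euclidean norm on the disorder. -/
theorem free_energy_lipschitz_in_disorder
    (N : ℕ) (hN : 0 < N) (β : ℝ) (hβ : 0 < β) (p0 : ℕ) (hp0 : 2 ≤ p0)
    (γ : ℕ → ℝ) (hγ : ∀ p, 0 ≤ γ p) :
    LipschitzWith
      (Real.toNNReal (β * Real.sqrt ((∑ p ∈ Finset.Icc 2 p0, γ p ^ 2) / N)))
      (FreeEnergyFin p0 N γ β) := by
  have hK : 0 ≤ β * Real.sqrt ((∑ p ∈ Finset.Icc 2 p0, γ p ^ 2) / N) := by positivity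
  refine LipschitzWith.of_le_add_mul _ fun J J' => ?_
  rw [Real.coe_toNNReal _ hK]
  exact free_le N hN β hβ p0 γ J J'

end SpinGlass
end
end
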